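/- arXiv:2405.10179 — 3 statements merged into one kernel-verified Lean document; each statement's English description precedes it below -/
import Mathlib

section
/- Let 0 < q < 1 and b_k = q^k for k ≥ 0. Then, in the linear setting, conditions (C1): lim_{n→∞} (1 − h_n)·ln n = 0 and (C2): sup_{k≥0} (b_k − b_{k+1})/b_{k+1} < ∞ both hold; consequently lim_{n→∞} H_{h_n}(J_n) = 1. -/
open Set Filter MeasureTheory Topology

noncomputable section

/-- Composition `g_{i₁} ∘ g_{i₂} ∘ ⋯ ∘ g_{i_l}` along a finite word. -/
def wordComp (g : ℕ → ℝ → ℝ) : List ℕ → ℝ → ℝ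
  | [] => id
  | k :: w => g k ∘ wordComp g w

/-- The limit set `J_n` of the IFS `S_n = {g_1, …, g_n}`. -/
def limitSet (g : ℕ → ℝ → ℝ) (n : ℕ) : Set ℝ :=
  ⋂ l : ℕ, ⋃ w ∈ {w : List ℕ | w.length = l + 1 ∧ ∀ i ∈ w, 1 ≤ i ∧ i ≤ n},
    wordComp g w '' Set.Icc (0 : ℝ) 1

/-- The decreasing affine map `g_k(x) = b_{k-1} - (b_{k-1} - b_k)·x`. -/
def gAff (b : ℕ → ℝ) (k : ℕ) (x : ℝ) : ℝ := b (k - 1) - (b (k - 1) - b k) * x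

/-- lengths of the first level intervals -/
def aa (q : ℝ) (k : ℕ) : ℝ := q ^ (k - 1) - q ^ k

/-- weight of the level `l` cylinders contained in `[x,y]` -/
def NN (q h : ℝ) (n : ℕ) : ℕ → ℝ → ℝ → ℝ
  | 0, x, y => if x ≤ 0 ∧ 1 ≤ y then 1 else 0
  | l + 1, x, y => ∑ k ∈ Finset.Icc 1 n,
      aa q k ^ h * NN q h n l ((q ^ (k - 1) - y) / aa q k) ((q ^ (k - 1) - x) / aa q k)

def CC (q h : ℝ) : ℝ := (1 - q) ^ h / (1 - q ^ h)

def PP (q h : ℝ) : ℝ := CC q h * (CC q h * CC (1 - q) h)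

lemma aa_eq (q : ℝ) {k : ℕ} (hk : 1 ≤ k) : aa q k = q ^ (k - 1) * (1 - q) := by
  obtain ⟨m, rfl⟩ := Nat.exists_eq_add_of_le' hk
  simp [aa, pow_succ]; ring

lemma aa_pos {q : ℝ} (hq0 : 0 < q) (hq1 : q < 1) {k : ℕ} (hk : 1 ≤ k) : 0 < aa q k := by
  rw [aa_eq q hk]
  have : 0 < 1 - q := by linarith
  positivity

lemma aa_le {q : ℝ} (hq0 : 0 < q) (hq1 : q < 1) {k : ℕ} (hk : 1 ≤ k) : aa q k ≤ 1 - q := by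
  rw [aa_eq q hk]
  have h1 : 0 < 1 - q := by linarith
  have h2 : q ^ (k - 1) ≤ 1 := pow_le_one₀ hq0.le hq1.le
  nlinarith

section
variable {q h : ℝ} {n : ℕ}

lemma qh_lt (hq0 : 0 < q) (hq1 : q < 1) (h0 : 0 < h) : q ^ h < 1 :=
  Real.rpow_lt_one hq0.le hq1 h0

lemma one_le_CC (hq0 : 0 < q) (hq1 : q < 1) (h0 : 0 < h) (h1 : h ≤ 1) : 1 ≤ CC q h := by
  have := qh_lt hq0 hq1 h0
  rw [CC, le_div_iff₀ (by linarith)]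
  have := Real.rpow_add_le_add_rpow (p := h) (a := 1 - q) (b := q) (by linarith) hq0.le h0.le h1
  simp at this
  linarith

lemma aa_rpow (hq0 : 0 < q) (hq1 : q < 1) (h0 : 0 < h) {k : ℕ} (hk : 1 ≤ k) :
    aa q k ^ h = CC q h * ((q ^ (k-1)) ^ h - (q ^ k) ^ h) := by
  have h2 := qh_lt hq0 hq1 h0
  have h3 : (1 - q ^ h) ≠ 0 := by linarith
  rw [aa_eq q hk, Real.mul_rpow (by positivity) (by linarith), CC]
  obtain ⟨m, rfl⟩ := Nat.exists_eq_add_of_le' hk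
  simp only [Nat.add_sub_cancel, pow_succ]
  rw [Real.mul_rpow (by positivity) hq0.le]
  field_simp

lemma sum_Ioc (hq0 : 0 < q) (hq1 : q < 1) (h0 : 0 < h) {i j : ℕ} (hij : i ≤ j) :
    ∑ k ∈ Finset.Ioc i j, aa q k ^ h = CC q h * ((q ^ i) ^ h - (q ^ j) ^ h) := by
  induction j, hij using Nat.le_induction with
  | base => simp
  | succ j hj ih =>
    rw [← Finset.insert_Ioc_right_eq_Ioc_add_one hj, Finset.sum_insert (by simp), ih,
      aa_rpow hq0 hq1 h0 (by omega)]
    simp; ring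

lemma sum_mid (hq0 : 0 < q) (hq1 : q < 1) (h0 : 0 < h) (h1 : h ≤ 1) {i j : ℕ} (hij : i ≤ j) :
    ∑ k ∈ Finset.Icc 1 n, (if i < k ∧ k ≤ j then aa q k ^ h else 0)
      ≤ CC q h * (q ^ i - q ^ j) ^ h := by
  have hC := one_le_CC hq0 hq1 h0 h1
  calc _ = ∑ k ∈ (Finset.Icc 1 n).filter (fun k => i < k ∧ k ≤ j), aa q k ^ h := by
        rw [Finset.sum_filter]
    _ ≤ ∑ k ∈ Finset.Ioc i j, aa q k ^ h := by
        apply Finset.sum_le_sum_of_subset_of_nonneg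
        · intro k; simp
        · intro k hk _
          simp at hk
          exact Real.rpow_nonneg (aa_pos hq0 hq1 (by omega)).le _
    _ = CC q h * ((q ^ i) ^ h - (q ^ j) ^ h) := sum_Ioc hq0 hq1 h0 hij
    _ ≤ _ := by
        have h2 : q ^ j ≤ q ^ i := pow_le_pow_of_le_one hq0.le hq1.le hij
        have := Real.rpow_add_le_add_rpow (p := h) (a := q ^ i - q ^ j) (b := q ^ j)
          (by linarith) (by positivity) h0.le h1
        simp only [sub_add_cancel] at this
        gcongr
        linarith

/-- key one sided inequality -/
lemma ratio_ineq {t θ : ℝ} (ht0 : 0 < t) (ht1 : t < 1) (h0 : 0 < h) (h1 : h ≤ 1)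
    (hθ0 : 0 ≤ θ) (hθ : θ ≤ t) : (1 - θ) ^ h ≤ CC t h * (1 - θ ^ h) := by
  have hconc := Real.concaveOn_rpow h0.le h1
  have h2 := qh_lt ht0 ht1 h0
  have e1 : (1 - t) * (1 - θ ^ h) ≥ (1 - θ) * (1 - t ^ h) := by
    have hd : 0 < 1 - θ := by linarith
    have hc2 := hconc.2
    have := @hc2 θ hθ0 1 (by simp) ((1 - t)/(1-θ)) ((t - θ)/(1-θ))
      (by apply div_nonneg <;> linarith) (by apply div_nonneg <;> linarith) (by field_simp; ring)
    simp only [smul_eq_mul, mul_one, Real.one_rpow] at this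
    have e : (1 - t) / (1 - θ) * θ + (t - θ) / (1 - θ) = t := by field_simp; ring
    rw [e] at this
    have e2 : (1 - t) / (1 - θ) * θ ^ h + (t - θ) / (1 - θ) = ((1-t) * θ ^ h + (t - θ))/(1-θ) := by
      ring
    rw [e2, div_le_iff₀ hd] at this
    nlinarith
  have e3 : (1 - θ) ^ h ≤ (1 - θ) * ((1 - t) ^ h / (1 - t)) := by
    have p1 : 0 < 1 - θ := by linarith
    have p2 : 0 < 1 - t := by linarith
    have : (1 - θ) ^ (h - 1) ≤ (1 - t) ^ (h - 1) :=
      Real.rpow_le_rpow_of_nonpos p2 (by linarith) (by linarith)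
    rw [Real.rpow_sub_one p1.ne', Real.rpow_sub_one p2.ne', div_le_iff₀ p1] at this
    linarith
  have p2 : 0 < 1 - t := by linarith
  have p3 : 0 < (1 - t) ^ h := Real.rpow_pos_of_pos p2 _
  have p4 : 0 < 1 - t ^ h := by linarith
  refine e3.trans ?_
  rw [CC]
  have e4 : (1 - θ) / (1 - t) ≤ (1 - θ ^ h) / (1 - t ^ h) := by
    rw [div_le_div_iff₀ p2 p4]; linarith
  calc _ = (1 - t) ^ h * ((1 - θ) / (1 - t)) := by ring
    _ ≤ (1 - t) ^ h * ((1 - θ ^ h) / (1 - t ^ h)) := by gcongr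
    _ = _ := by ring

lemma CC_le_PP (hq0 : 0 < q) (hq1 : q < 1) (h0 : 0 < h) (h1 : h ≤ 1) : CC q h ≤ PP q h := by
  have a := one_le_CC hq0 hq1 h0 h1
  have b := one_le_CC (q := 1 - q) (by linarith) (by linarith) h0 h1
  rw [PP]
  nlinarith [mul_le_mul a b zero_le_one (by linarith)]

lemma one_le_PP (hq0 : 0 < q) (hq1 : q < 1) (h0 : 0 < h) (h1 : h ≤ 1) : 1 ≤ PP q h :=
  (one_le_CC hq0 hq1 h0 h1).trans (CC_le_PP hq0 hq1 h0 h1)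

lemma two_piece (hq0 : 0 < q) (hq1 : q < 1) (h0 : 0 < h) (h1 : h ≤ 1) {X Y : ℝ}
    (hX : 0 < X) (hY : 0 ≤ Y) (hXY : Y ≤ q * (X + Y) ∨ Y ≤ (1 - q) * (X + Y)) :
    CC q h * X ^ h + PP q h * Y ^ h ≤ PP q h * (X + Y) ^ h := by
  have a := one_le_CC hq0 hq1 h0 h1
  have b := one_le_CC (q := 1 - q) (by linarith) (by linarith) h0 h1
  have hs : 0 < X + Y := by linarith
  set θ := Y / (X + Y) with hθ
  have hθ0 : 0 ≤ θ := by positivity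
  have hθ1 : θ ≤ 1 := by rw [hθ, div_le_one hs]; linarith
  have hθh : θ ^ h ≤ 1 := Real.rpow_le_one hθ0 hθ1 h0.le
  have key : (1 - θ) ^ h ≤ (CC q h * CC (1 - q) h) * (1 - θ ^ h) := by
    rcases hXY with H | H
    · have := ratio_ineq hq0 hq1 h0 h1 hθ0 (by rw [hθ, div_le_iff₀ hs]; exact H)
      refine this.trans ?_
      apply mul_le_mul_of_nonneg_right _ (by linarith)
      nlinarith
    · have := ratio_ineq (t := 1 - q) (by linarith) (by linarith) h0 h1 hθ0
        (by rw [hθ, div_le_iff₀ hs]; exact H)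
      refine this.trans ?_
      apply mul_le_mul_of_nonneg_right _ (by linarith)
      nlinarith
  have eX : X = (1 - θ) * (X + Y) := by rw [hθ]; field_simp; ring
  have eY : Y = θ * (X + Y) := by rw [hθ]; field_simp
  have eX' : X ^ h = (1 - θ) ^ h * (X + Y) ^ h := by
    conv_lhs => rw [eX]
    rw [Real.mul_rpow (by linarith) hs.le]
  have eY' : Y ^ h = θ ^ h * (X + Y) ^ h := by
    conv_lhs => rw [eY]
    rw [Real.mul_rpow hθ0 hs.le]
  rw [eX', eY']
  have hp : 0 ≤ (X + Y) ^ h := by positivity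
  have : CC q h * (1 - θ) ^ h ≤ PP q h * (1 - θ ^ h) := by
    rw [PP, mul_assoc]; gcongr
  nlinarith [mul_le_mul_of_nonneg_right this hp]

lemma three_piece (h0 : 0 < h) (h1 : h ≤ 1) {X Y Z : ℝ}
    (hX : 0 ≤ X) (hY : 0 ≤ Y) (hZ : 0 ≤ Z) :
    X ^ h + Y ^ h + Z ^ h ≤ 3 ^ (1 - h) * (X + Y + Z) ^ h := by
  have hconc := Real.concaveOn_rpow h0.le h1
  have := hconc.le_map_sum (t := Finset.univ) (w := fun _ : Fin 3 => (1/3 : ℝ)) (p := ![X, Y, Z])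
    (by intros; positivity) (by simp) (by intro i _; fin_cases i <;> simpa)
  simp only [Fin.sum_univ_three, smul_eq_mul] at this
  simp at this
  have e : 3⁻¹ * X + 3⁻¹ * Y + 3⁻¹ * Z = (X + Y + Z) / 3 := by ring
  rw [e, Real.div_rpow (by positivity) (by norm_num)] at this
  rw [Real.rpow_sub (by norm_num), Real.rpow_one]
  have : X ^ h + Y ^ h + Z ^ h ≤ 3 * ((X + Y + Z) ^ h / 3 ^ h) := by linarith
  refine this.trans (le_of_eq ?_)
  ring

end
section
variable {q h : ℝ} {n : ℕ}

lemma NN_nonneg (hq0 : 0 < q) (hq1 : q < 1) (l : ℕ) (x y : ℝ) : 0 ≤ NN q h n l x y := by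
  induction l generalizing x y with
  | zero => simp only [NN]; split_ifs <;> norm_num
  | succ l ih =>
    simp only [NN]
    apply Finset.sum_nonneg
    intro k hk
    exact mul_nonneg (Real.rpow_nonneg (aa_pos hq0 hq1 (Finset.mem_Icc.1 hk).1).le _) (ih _ _)

lemma NN_le_one (hq0 : 0 < q) (hq1 : q < 1) (hm : ∑ k ∈ Finset.Icc 1 n, aa q k ^ h = 1)
    (l : ℕ) (x y : ℝ) : NN q h n l x y ≤ 1 := by
  induction l generalizing x y with
  | zero => simp only [NN]; split_ifs <;> norm_num
  | succ l ih =>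
    simp only [NN]
    rw [← hm]
    apply Finset.sum_le_sum
    intro k hk
    exact mul_le_of_le_one_right (Real.rpow_nonneg (aa_pos hq0 hq1 (Finset.mem_Icc.1 hk).1).le _)
      (ih _ _)

lemma NN_zero (hq0 : 0 < q) (hq1 : q < 1) (l : ℕ) (x y : ℝ) (hxy : y ≤ 0 ∨ 1 ≤ x) :
    NN q h n l x y = 0 := by
  induction l generalizing x y with
  | zero =>
    simp only [NN]; rw [if_neg]
    rintro ⟨h1, h2⟩
    rcases hxy with h | h <;> linarith
  | succ l ih =>
    simp only [NN]
    apply Finset.sum_eq_zero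
    intro k hk
    have hk := (Finset.mem_Icc.1 hk).1
    have ha := aa_pos hq0 hq1 hk
    have h1 : q ^ (k - 1) ≤ 1 := pow_le_one₀ hq0.le hq1.le
    have h2 : aa q k ≤ q ^ (k - 1) := by
      have : 0 < q ^ k := by positivity
      rw [aa]; linarith
    rw [ih, mul_zero]
    rcases hxy with h | h
    · right
      rw [le_div_iff₀ ha]; linarith
    · left
      apply div_nonpos_of_nonpos_of_nonneg _ ha.le
      linarith

lemma scale_eq {a Y P : ℝ} (ha : 0 < a) (hY : 0 ≤ Y) : a ^ h * (P * (Y / a) ^ h) = P * Y ^ h := by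
  rw [Real.div_rpow hY ha.le]
  have : 0 < a ^ h := Real.rpow_pos_of_pos ha _
  field_simp

/-- location in the partition -/
lemma locate (hq0 : 0 < q) (hq1 : q < 1) {s : ℝ} (h0 : 0 < s) (h1 : s < 1) :
    ∃ m : ℕ, q ^ (m + 1) < s ∧ s ≤ q ^ m :=
  exists_nat_pow_near_of_lt_one h0 h1.le hq0 hq1

lemma right_zero (hq0 : 0 < q) (hq1 : q < 1) {m k : ℕ} {y : ℝ} (hk : 1 ≤ k) (hkm : k ≤ m)
    (hy : y ≤ q ^ m) (l : ℕ) (y' : ℝ) : NN q h n l ((q ^ (k - 1) - y) / aa q k) y' = 0 := by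
  apply NN_zero hq0 hq1
  right
  rw [le_div_iff₀ (aa_pos hq0 hq1 hk), aa]
  have : q ^ m ≤ q ^ k := pow_le_pow_of_le_one hq0.le hq1.le hkm
  linarith

lemma left_zero (hq0 : 0 < q) (hq1 : q < 1) {m k : ℕ} {x : ℝ} (hkm : m + 1 < k)
    (hx : q ^ (m + 1) ≤ x) (l : ℕ) (x' : ℝ) :
    NN q h n l x' ((q ^ (k - 1) - x) / aa q k) = 0 := by
  apply NN_zero hq0 hq1
  left
  apply div_nonpos_of_nonpos_of_nonneg _ (aa_pos hq0 hq1 (by omega)).le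
  have : q ^ (k - 1) ≤ q ^ (m + 1) := pow_le_pow_of_le_one hq0.le hq1.le (by omega)
  linarith

lemma NN_one_sided (hq0 : 0 < q) (hq1 : q < 1) (h0 : 0 < h) (h1 : h ≤ 1)
    (hm : ∑ k ∈ Finset.Icc 1 n, aa q k ^ h = 1) (l : ℕ) :
    (∀ x s, 0 ≤ s → NN q h n l x s ≤ PP q h * s ^ h) ∧
    (∀ u y, 0 ≤ u → NN q h n l (1 - u) y ≤ PP q h * u ^ h) := by
  have hP := one_le_PP hq0 hq1 h0 h1
  have hC := one_le_CC hq0 hq1 h0 h1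
  have big : ∀ l x y s, 1 ≤ s → NN q h n l x y ≤ PP q h * s ^ h := fun l x y s hs => by
    have : 1 ≤ s ^ h := Real.one_le_rpow hs h0.le
    have := NN_le_one hq0 hq1 hm l x y
    nlinarith
  have nn : ∀ s : ℝ, 0 ≤ s → 0 ≤ PP q h * s ^ h := fun s hs => by positivity
  induction l with
  | zero =>
    constructor
    · intro x s hs
      by_cases hs1 : 1 ≤ s
      · exact big _ _ _ _ hs1
      · simp only [NN]; rw [if_neg (by tauto)]; exact nn s hs
    · intro u y hs
      by_cases hs1 : 1 ≤ u
      · exact big _ _ _ _ hs1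
      · simp only [NN]; rw [if_neg]
        · exact nn u hs
        · rintro ⟨h1, -⟩; linarith
  | succ l ih =>
    obtain ⟨ihL, ihR⟩ := ih
    constructor
    · intro x s hs
      by_cases hs1 : 1 ≤ s
      · exact big _ _ _ _ hs1
      rcases hs.eq_or_lt with rfl | hs0
      · rw [NN_zero hq0 hq1 _ _ _ (by simp)]; exact nn _ le_rfl
      obtain ⟨m, hm1, hm2⟩ := locate hq0 hq1 hs0 (not_le.1 hs1)
      have hb : ∀ k ∈ Finset.Icc 1 n,
          aa q k ^ h * NN q h n l ((q ^ (k - 1) - s) / aa q k) ((q ^ (k - 1) - x) / aa q k)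
          ≤ (if m + 1 < k ∧ k ≤ max n (m+1) then aa q k ^ h else 0)
            + (if k = m + 1 then PP q h * (s - q ^ (m + 1)) ^ h else 0) := by
        intro k hk
        obtain ⟨hk1, hkn⟩ := Finset.mem_Icc.1 hk
        have ha := aa_pos hq0 hq1 hk1
        rcases lt_trichotomy k (m + 1) with hlt | heq | hgt
        · rw [right_zero hq0 hq1 hk1 (by omega) hm2, if_neg (by omega), if_neg (by omega)]
          simp
        · rw [if_neg (by omega), if_pos heq]
          have e : (q ^ (k - 1) - s) / aa q k = 1 - (s - q ^ (m + 1)) / aa q k := by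
            rw [← heq, eq_sub_iff_add_eq, ← add_div, div_eq_one_iff_eq ha.ne', aa]; ring
          rw [e, ← scale_eq ha (by linarith), zero_add]
          gcongr
          apply ihR
          apply div_nonneg _ ha.le
          linarith
        · rw [if_pos ⟨hgt, by omega⟩, if_neg (by omega), add_zero]
          exact mul_le_of_le_one_right (by positivity) (NN_le_one hq0 hq1 hm _ _ _)
      simp only [NN]
      refine (Finset.sum_le_sum hb).trans ?_
      rw [Finset.sum_add_distrib, Finset.sum_ite_eq']
      have hmid := sum_mid (n := n) hq0 hq1 h0 h1 (le_max_right n (m + 1))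
      have hX : 0 < q ^ (m + 1) := by positivity
      have hmid2 : (q ^ (m + 1) - q ^ max n (m + 1)) ^ h ≤ (q ^ (m + 1)) ^ h := by
        have e1 : q ^ max n (m + 1) ≤ q ^ (m + 1) :=
          pow_le_pow_of_le_one hq0.le hq1.le (le_max_right _ _)
        have e2 : 0 < q ^ max n (m + 1) := by positivity
        apply Real.rpow_le_rpow _ _ h0.le <;> linarith
      have htp := two_piece hq0 hq1 h0 h1 hX (Y := s - q ^ (m + 1)) (by linarith)
        (Or.inr (by rw [pow_succ] at *; nlinarith))
      have e3 : q ^ (m + 1) + (s - q ^ (m + 1)) = s := by ring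
      rw [e3] at htp
      refine le_trans (add_le_add (hmid.trans (mul_le_mul_of_nonneg_left hmid2 (by linarith))) ?_) htp
      split_ifs
      · exact le_rfl
      · apply nn; linarith
    · intro u y hu
      by_cases hs1 : 1 ≤ u
      · exact big _ _ _ _ hs1
      rcases hu.eq_or_lt with rfl | hs0
      · rw [NN_zero hq0 hq1 _ _ _ (by simp)]; exact nn _ le_rfl
      push Not at hs1
      obtain ⟨x, rfl⟩ : ∃ x, u = 1 - x := ⟨1 - u, by ring⟩
      simp only [sub_sub_cancel]
      obtain ⟨m, hm1, hm2⟩ := locate hq0 hq1 (s := x) (by linarith) (by linarith)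
      have hb : ∀ k ∈ Finset.Icc 1 n,
          aa q k ^ h * NN q h n l ((q ^ (k - 1) - y) / aa q k) ((q ^ (k - 1) - x) / aa q k)
          ≤ (if 0 < k ∧ k ≤ m then aa q k ^ h else 0)
            + (if k = m + 1 then PP q h * (q ^ m - x) ^ h else 0) := by
        intro k hk
        obtain ⟨hk1, hkn⟩ := Finset.mem_Icc.1 hk
        have ha := aa_pos hq0 hq1 hk1
        rcases lt_trichotomy k (m + 1) with hlt | heq | hgt
        · rw [if_pos ⟨hk1, by omega⟩, if_neg (by omega), add_zero]
          exact mul_le_of_le_one_right (by positivity) (NN_le_one hq0 hq1 hm _ _ _)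
        · rw [if_neg (by omega), if_pos heq]
          have e : q ^ (k - 1) = q ^ m := by rw [heq]; simp
          rw [e, ← scale_eq ha (by linarith), zero_add]
          gcongr
          apply ihL
          apply div_nonneg _ ha.le
          linarith
        · rw [left_zero hq0 hq1 hgt hm1.le, if_neg (by omega), if_neg (by omega)]
          simp
      simp only [NN]
      refine (Finset.sum_le_sum hb).trans ?_
      rw [Finset.sum_add_distrib, Finset.sum_ite_eq']
      have hmid := sum_mid (n := n) hq0 hq1 h0 h1 (Nat.zero_le m)
      rw [pow_zero] at hmid
      have last : (if m + 1 ∈ Finset.Icc 1 n then PP q h * (q ^ m - x) ^ h else 0)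
          ≤ PP q h * (q ^ m - x) ^ h := by
        split_ifs
        · exact le_rfl
        · apply nn; linarith
      refine (add_le_add hmid last).trans ?_
      rcases Nat.eq_zero_or_pos m with rfl | hmpos
      · simp [h0.ne']
      · have hqm : q ^ m ≤ q := pow_le_of_le_one hq0.le hq1.le (by omega)
        have htp := two_piece hq0 hq1 h0 h1 (X := 1 - q ^ m) (Y := q ^ m - x)
          (by linarith) (by linarith) (Or.inl (by nlinarith))
        have e3 : 1 - q ^ m + (q ^ m - x) = 1 - x := by ring
        rwa [e3] at htp

lemma NN_two_sided (hq0 : 0 < q) (hq1 : q < 1) (h0 : 0 < h) (h1 : h ≤ 1)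
    (hm : ∑ k ∈ Finset.Icc 1 n, aa q k ^ h = 1) (l : ℕ) :
    ∀ x y, x ≤ y → NN q h n l x y ≤ 3 ^ (1 - h) * PP q h * (y - x) ^ h := by
  have hP := one_le_PP hq0 hq1 h0 h1
  have hCP := CC_le_PP hq0 hq1 h0 h1
  have h3 : (1:ℝ) ≤ 3 ^ (1 - h) := Real.one_le_rpow (by norm_num) (by linarith)
  have hK : PP q h ≤ 3 ^ (1 - h) * PP q h := by nlinarith
  have hK0 : 0 ≤ 3 ^ (1 - h) * PP q h := by linarith
  have nn : ∀ s : ℝ, 0 ≤ s → 0 ≤ 3 ^ (1 - h) * PP q h * s ^ h := fun s hs => by positivity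
  induction l with
  | zero =>
    intro x y hxy
    simp only [NN]
    split_ifs with H
    · have : 1 ≤ (y - x) ^ h := Real.one_le_rpow (by linarith) h0.le
      nlinarith
    · apply nn; linarith
  | succ l ih =>
    intro x y hxy
    obtain ⟨oL, oR⟩ := NN_one_sided hq0 hq1 h0 h1 hm (l + 1)
    obtain ⟨ihL, ihR⟩ := NN_one_sided hq0 hq1 h0 h1 hm l
    by_cases hy0 : y ≤ 0
    · rw [NN_zero hq0 hq1 _ _ _ (Or.inl hy0)]; apply nn; linarith
    by_cases hx1 : 1 ≤ x
    · rw [NN_zero hq0 hq1 _ _ _ (Or.inr hx1)]; apply nn; linarith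
    push Not at hy0 hx1
    by_cases hx0 : x ≤ 0
    · refine (oL x y hy0.le).trans ?_
      apply mul_le_mul hK (Real.rpow_le_rpow hy0.le (by linarith) h0.le) (by positivity) hK0
    by_cases hy1 : 1 ≤ y
    · have := oR (1 - x) y (by linarith)
      rw [sub_sub_cancel] at this
      refine this.trans ?_
      have hx' : 0 ≤ 1 - x := by linarith
      apply mul_le_mul hK (Real.rpow_le_rpow hx' (by linarith) h0.le) (by positivity) hK0
    push Not at hx0 hy1
    obtain ⟨m, hm1, hm2⟩ := locate hq0 hq1 hy0 hy1
    obtain ⟨j, hj1, hj2⟩ := locate hq0 hq1 hx0 hx1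
    have hmj : m ≤ j := by
      by_contra hc
      have : q ^ m ≤ q ^ (j + 1) := pow_le_pow_of_le_one hq0.le hq1.le (by omega)
      linarith
    simp only [NN]
    rcases hmj.eq_or_lt with rfl | hlt
    · have hb : ∀ k ∈ Finset.Icc 1 n,
          aa q k ^ h * NN q h n l ((q ^ (k - 1) - y) / aa q k) ((q ^ (k - 1) - x) / aa q k)
          ≤ (if k = m + 1 then 3 ^ (1 - h) * PP q h * (y - x) ^ h else 0) := by
        intro k hk
        obtain ⟨hk1, hkn⟩ := Finset.mem_Icc.1 hk
        have ha := aa_pos hq0 hq1 hk1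
        rcases lt_trichotomy k (m + 1) with hlt | heq | hgt
        · rw [right_zero hq0 hq1 hk1 (by omega) hm2, if_neg (by omega)]
          simp
        · rw [if_pos heq, ← scale_eq ha (by linarith)]
          have e : (y - x) / aa q k = (q ^ (k - 1) - x) / aa q k - (q ^ (k - 1) - y) / aa q k := by
            rw [← sub_div]; ring
          rw [e]
          gcongr
          apply ih
          gcongr
        · rw [left_zero hq0 hq1 hgt hj1.le, if_neg (by omega)]
          simp
      refine (Finset.sum_le_sum hb).trans ?_
      rw [Finset.sum_ite_eq']
      split_ifs
      · exact le_rfl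
      · apply nn; linarith
    · have hX : 0 ≤ y - q ^ (m + 1) := by linarith
      have hZ : 0 ≤ q ^ j - x := by linarith
      have hY : 0 ≤ q ^ (m + 1) - q ^ j := by
        have : q ^ j ≤ q ^ (m + 1) := pow_le_pow_of_le_one hq0.le hq1.le (by omega)
        linarith
      have hb : ∀ k ∈ Finset.Icc 1 n,
          aa q k ^ h * NN q h n l ((q ^ (k - 1) - y) / aa q k) ((q ^ (k - 1) - x) / aa q k)
          ≤ (if m + 1 < k ∧ k ≤ j then aa q k ^ h else 0)
            + (if k = m + 1 then PP q h * (y - q ^ (m + 1)) ^ h else 0)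
            + (if k = j + 1 then PP q h * (q ^ j - x) ^ h else 0) := by
        intro k hk
        obtain ⟨hk1, hkn⟩ := Finset.mem_Icc.1 hk
        have ha := aa_pos hq0 hq1 hk1
        rcases lt_trichotomy k (m + 1) with hlt | heq | hgt
        · rw [right_zero hq0 hq1 hk1 (by omega) hm2, if_neg (by omega), if_neg (by omega),
            if_neg (by omega)]
          simp
        · rw [if_neg (by omega), if_pos heq, if_neg (by omega)]
          have e : (q ^ (k - 1) - y) / aa q k = 1 - (y - q ^ (m + 1)) / aa q k := by
            rw [← heq, eq_sub_iff_add_eq, ← add_div, div_eq_one_iff_eq ha.ne', aa]; ring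
          rw [e, ← scale_eq ha hX, zero_add, add_zero]
          gcongr
          apply ihR
          exact div_nonneg hX ha.le
        rcases lt_trichotomy k (j + 1) with hlt2 | heq | hgt2
        · rw [if_pos ⟨hgt, by omega⟩, if_neg (by omega), if_neg (by omega), add_zero, add_zero]
          exact mul_le_of_le_one_right (by positivity) (NN_le_one hq0 hq1 hm _ _ _)
        · rw [if_neg (by omega), if_neg (by omega), if_pos heq]
          have e : q ^ (k - 1) = q ^ j := by rw [heq]; simp
          rw [e, ← scale_eq ha hZ, zero_add, zero_add]
          gcongr
          apply ihL
          exact div_nonneg hZ ha.le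
        · rw [left_zero hq0 hq1 hgt2 hj1.le, if_neg (by omega), if_neg (by omega),
            if_neg (by omega)]
          simp
      refine (Finset.sum_le_sum hb).trans ?_
      rw [Finset.sum_add_distrib, Finset.sum_add_distrib, Finset.sum_ite_eq', Finset.sum_ite_eq']
      have hmid := sum_mid (n := n) hq0 hq1 h0 h1 (i := m + 1) (j := j) (by omega)
      have hmid' := hmid.trans (mul_le_mul_of_nonneg_right hCP (by positivity))
      have l1 : (if m + 1 ∈ Finset.Icc 1 n then PP q h * (y - q ^ (m + 1)) ^ h else 0)
          ≤ PP q h * (y - q ^ (m + 1)) ^ h := by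
        split_ifs
        · exact le_rfl
        · positivity
      have l2 : (if j + 1 ∈ Finset.Icc 1 n then PP q h * (q ^ j - x) ^ h else 0)
          ≤ PP q h * (q ^ j - x) ^ h := by
        split_ifs
        · exact le_rfl
        · positivity
      have h3p := three_piece h0 h1 hX hY hZ
      have e3 : y - q ^ (m + 1) + (q ^ (m + 1) - q ^ j) + (q ^ j - x) = y - x := by ring
      rw [e3] at h3p
      have h3p' := mul_le_mul_of_nonneg_left h3p (by linarith : 0 ≤ PP q h)
      calc _ ≤ _ := add_le_add (add_le_add hmid' l1) l2
        _ = PP q h * ((y - q ^ (m + 1)) ^ h + (q ^ (m + 1) - q ^ j) ^ h + (q ^ j - x) ^ h) := by ring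
        _ ≤ _ := h3p'
        _ = _ := by ring

end
section
variable {q h : ℝ} {n : ℕ}

/-- the concrete maps -/
def gq (q : ℝ) : ℕ → ℝ → ℝ := gAff (fun k => q ^ k)

lemma gq_eq (q : ℝ) (k : ℕ) (x : ℝ) : gq q k x = q ^ (k - 1) - aa q k * x := rfl

/-- words of length `l` -/
def WW (n l : ℕ) : Set (List ℕ) := {w : List ℕ | w.length = l ∧ ∀ i ∈ w, 1 ≤ i ∧ i ≤ n}

lemma WW_finite (n l : ℕ) : (WW n l).Finite := by
  induction l with
  | zero =>
    apply (Set.finite_singleton ([] : List ℕ)).subset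
    rintro w ⟨hw, -⟩
    simpa using hw
  | succ l ih =>
    apply (Set.Finite.image2 List.cons (Set.finite_Icc 1 n) ih).subset
    rintro w ⟨hw, hi⟩
    cases w with
    | nil => simp at hw
    | cons k w =>
      refine ⟨k, by simpa using hi k (by simp), w, ⟨by simpa using hw, fun i hiw => hi i (by simp [hiw])⟩, rfl⟩

lemma gq_mem (hq0 : 0 < q) (hq1 : q < 1) {k : ℕ} (hk : 1 ≤ k) {x : ℝ} (hx : x ∈ Icc (0:ℝ) 1) :
    gq q k x ∈ Icc (0:ℝ) 1 := by
  have ha := aa_pos hq0 hq1 hk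
  have h1 : q ^ (k - 1) ≤ 1 := pow_le_one₀ hq0.le hq1.le
  have h2 : aa q k ≤ q ^ (k - 1) := by
    have : 0 < q ^ k := by positivity
    rw [aa]; linarith
  rw [gq_eq]
  obtain ⟨hx0, hx1⟩ := hx
  constructor <;> nlinarith

lemma wc_mem (hq0 : 0 < q) (hq1 : q < 1) (w : List ℕ) (hw : ∀ i ∈ w, 1 ≤ i) {x : ℝ}
    (hx : x ∈ Icc (0:ℝ) 1) : wordComp (gq q) w x ∈ Icc (0:ℝ) 1 := by
  induction w with
  | nil => simpa [wordComp] using hx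
  | cons k w ih =>
    simp only [wordComp, Function.comp]
    exact gq_mem hq0 hq1 (hw k (by simp)) (ih (fun i hi => hw i (by simp [hi])))

lemma wc_cont (w : List ℕ) : Continuous (wordComp (gq q) w) := by
  induction w with
  | nil => exact continuous_id
  | cons k w ih =>
    simp only [wordComp]
    refine Continuous.comp ?_ ih
    have : gq q k = fun x => q ^ (k - 1) - aa q k * x := by funext x; rfl
    rw [this]; fun_prop

lemma wc_append (g : ℕ → ℝ → ℝ) (u v : List ℕ) (x : ℝ) :
    wordComp g (u ++ v) x = wordComp g u (wordComp g v x) := by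
  induction u with
  | nil => rfl
  | cons k u ih => simp only [List.cons_append, wordComp, Function.comp, ih]

lemma wc_dist (hq0 : 0 < q) (hq1 : q < 1) (w : List ℕ) (hw : ∀ i ∈ w, 1 ≤ i) (x y : ℝ) :
    |wordComp (gq q) w x - wordComp (gq q) w y| = (w.map (aa q)).prod * |x - y| := by
  induction w with
  | nil => simp [wordComp]
  | cons k w ih =>
    simp only [wordComp, Function.comp, List.map_cons, List.prod_cons]
    rw [mul_assoc, ← ih (fun i hi => hw i (by simp [hi]))]
    have ha := aa_pos hq0 hq1 (hw k (by simp))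
    rw [gq_eq, gq_eq, abs_sub_comm, ← abs_of_pos ha, ← abs_mul, abs_of_pos ha]
    congr 1; ring

lemma prod_nonneg' (hq0 : 0 < q) (hq1 : q < 1) (w : List ℕ) (hw : ∀ i ∈ w, 1 ≤ i) :
    0 ≤ (w.map (aa q)).prod ∧ (w.map (aa q)).prod ≤ (1 - q) ^ w.length := by
  induction w with
  | nil => simp
  | cons k w ih =>
    have ha := aa_pos hq0 hq1 (hw k (by simp))
    have hb := aa_le hq0 hq1 (hw k (by simp))
    obtain ⟨i1, i2⟩ := ih (fun i hi => hw i (by simp [hi]))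
    simp only [List.map_cons, List.prod_cons, List.length_cons, pow_succ']
    exact ⟨mul_nonneg ha.le i1, mul_le_mul hb i2 i1 (by linarith)⟩

lemma J_compact (q : ℝ) (n : ℕ) : IsCompact (limitSet (gq q) n) := by
  unfold limitSet
  have hcl : ∀ l : ℕ, IsCompact (⋃ w ∈ {w : List ℕ | w.length = l + 1 ∧ ∀ i ∈ w, 1 ≤ i ∧ i ≤ n},
      wordComp (gq q) w '' Set.Icc (0 : ℝ) 1) := by
    intro l
    apply (WW_finite n (l + 1)).isCompact_biUnion
    intro w _
    exact isCompact_Icc.image (wc_cont w)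
  exact (hcl 0).of_isClosed_subset (isClosed_iInter fun l => (hcl l).isClosed)
    (Set.iInter_subset _ 0)

lemma fixed_pt (hq1 : q < 1) (m : ℕ) :
    wordComp (gq q) (List.replicate m 1) (1 / (2 - q)) = 1 / (2 - q) := by
  induction m with
  | zero => rfl
  | succ m ih =>
    simp only [List.replicate_succ, wordComp, Function.comp, ih]
    rw [gq_eq]
    have : 2 - q ≠ 0 := by linarith
    simp [aa]
    field_simp
    ring

lemma pt_mem (hq0 : 0 < q) (hq1 : q < 1) (hn : 1 ≤ n) {w : List ℕ}
    (hw : ∀ i ∈ w, 1 ≤ i ∧ i ≤ n) :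
    wordComp (gq q) w (1 / (2 - q)) ∈ limitSet (gq q) n := by
  have hx0 : 1 / (2 - q) ∈ Icc (0:ℝ) 1 := by
    constructor
    · apply div_nonneg <;> linarith
    · rw [div_le_one] <;> linarith
  unfold limitSet
  rw [Set.mem_iInter]
  intro l
  set f := w ++ List.replicate (l + 1) 1 with hf
  have hfm : ∀ i ∈ f, 1 ≤ i ∧ i ≤ n := by
    intro i hi
    rw [hf, List.mem_append] at hi
    rcases hi with hi | hi
    · exact hw i hi
    · have := List.eq_of_mem_replicate hi
      omega
  have e : wordComp (gq q) w (1 / (2 - q)) = wordComp (gq q) f (1 / (2 - q)) := by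
    rw [hf, wc_append, fixed_pt hq1]
  rw [e, ← List.take_append_drop (l + 1) f, wc_append]
  apply Set.mem_biUnion (x := f.take (l + 1))
  · refine ⟨?_, fun i hi => hfm i (List.mem_of_mem_take hi)⟩
    simp [hf]
  · apply Set.mem_image_of_mem
    exact wc_mem hq0 hq1 _ (fun i hi => (hfm i (List.mem_of_mem_drop hi)).1) hx0

lemma cover_sum (hq0 : 0 < q) (hq1 : q < 1) (hm : ∑ k ∈ Finset.Icc 1 n, aa q k ^ h = 1)
    {ι : Type} (T : Finset ι) (l : ℕ) (x y : ι → ℝ)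
    (hc : ∀ w ∈ WW n l, ∃ i ∈ T, ∀ z ∈ Icc (0:ℝ) 1, wordComp (gq q) w z ∈ Icc (x i) (y i)) :
    1 ≤ ∑ i ∈ T, NN q h n l (x i) (y i) := by
  induction l generalizing x y with
  | zero =>
    obtain ⟨i, hi, hz⟩ := hc [] ⟨rfl, by simp⟩
    have e0 := hz 0 (by simp)
    have e1 := hz 1 (by simp)
    simp only [wordComp, id] at e0 e1
    have : NN q h n 0 (x i) (y i) = 1 := by
      simp only [NN]; rw [if_pos ⟨e0.1, e1.2⟩]
    rw [← this]
    exact Finset.single_le_sum (f := fun i => NN q h n 0 (x i) (y i))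
      (fun i _ => NN_nonneg hq0 hq1 _ _ _) hi
  | succ l ih =>
    simp only [NN]
    rw [Finset.sum_comm, ← hm]
    apply Finset.sum_le_sum
    intro k hk
    rw [← Finset.mul_sum]
    have hk' := Finset.mem_Icc.1 hk
    have ha := aa_pos hq0 hq1 hk'.1
    apply le_mul_of_one_le_right (by positivity)
    apply ih
    rintro w ⟨hw1, hw2⟩
    obtain ⟨i, hi, hz⟩ := hc (k :: w) ⟨by simp [hw1], by
      intro i hi
      rcases List.mem_cons.1 hi with rfl | hi
      · exact hk'
      · exact hw2 i hi⟩
    refine ⟨i, hi, fun z hzz => ?_⟩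
    have := hz z hzz
    simp only [wordComp, Function.comp] at this
    rw [gq_eq] at this
    obtain ⟨t1, t2⟩ := this
    constructor
    · rw [div_le_iff₀ ha]; linarith
    · rw [le_div_iff₀ ha]; linarith

lemma finite_cover (hq0 : 0 < q) (hq1 : q < 1) (h0 : 0 < h) (h1 : h ≤ 1) (hn : 1 ≤ n)
    (hm : ∑ k ∈ Finset.Icc 1 n, aa q k ^ h = 1) (x y : ℕ → ℝ) (hxy : ∀ i, x i ≤ y i)
    (hcov : limitSet (gq q) n ⊆ ⋃ i, Ioo (x i) (y i)) :
    ∃ T : Finset ℕ, 1 ≤ ∑ i ∈ T, 3 ^ (1 - h) * PP q h * (y i - x i) ^ h := by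
  obtain ⟨T, hT⟩ := (J_compact q n).elim_finite_subcover _ (fun i => isOpen_Ioo) hcov
  refine ⟨T, ?_⟩
  have hT' : limitSet (gq q) n ⊆ ⋃ i : T, Ioo (x i) (y i) := by
    intro z hz
    obtain ⟨i, hi, hz⟩ := Set.mem_iUnion₂.1 (hT hz)
    exact Set.mem_iUnion.2 ⟨⟨i, hi⟩, hz⟩
  obtain ⟨δ, hδ, hball⟩ := lebesgue_number_lemma_of_metric (J_compact q n)
    (fun i : T => isOpen_Ioo) hT'
  obtain ⟨l, hl⟩ := exists_pow_lt_of_lt_one hδ (by linarith : 1 - q < 1)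
  have hc := cover_sum (h := h) hq0 hq1 hm T l x y (by
    rintro w ⟨hw1, hw2⟩
    obtain ⟨⟨i, hi⟩, hb⟩ := hball _ (pt_mem hq0 hq1 hn hw2)
    refine ⟨i, hi, fun z hz => Ioo_subset_Icc_self (hb ?_)⟩
    rw [Metric.mem_ball, Real.dist_eq, wc_dist hq0 hq1 w (fun i hi => (hw2 i hi).1)]
    obtain ⟨p1, p2⟩ := prod_nonneg' hq0 hq1 w (fun i hi => (hw2 i hi).1)
    rw [hw1] at p2
    have : |z - 1 / (2 - q)| ≤ 1 := by
      have hx0 : 0 ≤ 1 / (2 - q) := by apply div_nonneg <;> linarith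
      have hx1 : 1 / (2 - q) ≤ 1 := by rw [div_le_one] <;> linarith
      rw [abs_le]
      constructor <;> linarith [hz.1, hz.2]
    nlinarith)
  exact hc.trans (Finset.sum_le_sum fun i _ => NN_two_sided hq0 hq1 h0 h1 hm l _ _ (hxy i))

lemma enlarge (h0 : 0 < h) (s : Set ℝ) (hs : Metric.ediam s ≤ 1) {ε : NNReal} (hε : 0 < ε) :
    ∃ x y : ℝ, x ≤ y ∧ s ⊆ Ioo x y ∧
      ENNReal.ofReal ((y - x) ^ h) ≤ (⨆ _ : s.Nonempty, Metric.ediam s ^ h) + ε := by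
  rcases s.eq_empty_or_nonempty with rfl | hne
  · exact ⟨0, 0, le_rfl, by simp, by simp [h0.ne']⟩
  have hb : Bornology.IsBounded s := by
    rw [Metric.isBounded_iff_ediam_ne_top]
    exact ne_top_of_le_ne_top ENNReal.one_ne_top hs
  set D := sSup s - sInf s with hD
  have hD0 : 0 ≤ D := by
    have := Real.sInf_le_sSup s hb.bddBelow hb.bddAbove
    linarith
  have hed : Metric.ediam s = ENNReal.ofReal D := Real.ediam_eq hb
  have hcont : ContinuousAt (fun η : ℝ => (D + 2 * η) ^ h) 0 := by
    apply ContinuousAt.rpow_const (by fun_prop)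
    right; exact h0.le
  have hev : ∀ᶠ η in 𝓝[>] (0:ℝ), (D + 2 * η) ^ h < D ^ h + ε := by
    apply (hcont.tendsto.mono_left nhdsWithin_le_nhds).eventually_lt_const
    simpa using hε
  obtain ⟨η, hη, hηpos⟩ := (hev.and self_mem_nhdsWithin).exists
  have hηpos : 0 < η := hηpos
  refine ⟨sInf s - η, sSup s + η, by linarith, ?_, ?_⟩
  · intro z hz
    have := csInf_le hb.bddBelow hz
    have := le_csSup hb.bddAbove hz
    constructor <;> linarith
  · rw [ciSup_pos hne, hed, ENNReal.ofReal_rpow_of_nonneg hD0 h0.le]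
    have e : sSup s + η - (sInf s - η) = D + 2 * η := by rw [hD]; ring
    rw [e, ← ENNReal.ofReal_coe_nnreal, ← ENNReal.ofReal_add (by positivity) (by positivity)]
    exact ENNReal.ofReal_le_ofReal hη.le

lemma lower_bound (hq0 : 0 < q) (hq1 : q < 1) (h0 : 0 < h) (h1 : h ≤ 1) (hn : 1 ≤ n)
    (hm : ∑ k ∈ Finset.Icc 1 n, aa q k ^ h = 1) :
    ENNReal.ofReal (3 ^ (1 - h) * PP q h)⁻¹ ≤ μH[h] (limitSet (gq q) n) := by
  have hP := one_le_PP hq0 hq1 h0 h1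
  set K := 3 ^ (1 - h) * PP q h with hK
  have hKpos : 0 < K := by positivity
  rw [Measure.hausdorffMeasure_apply]
  refine le_trans ?_ (le_iSup₂ (1 : ENNReal) one_pos)
  refine le_iInf fun t => le_iInf fun ht => le_iInf fun hd => ?_
  apply ENNReal.le_of_forall_pos_le_add
  intro ε hε _
  obtain ⟨ε', hε', hsum⟩ := ENNReal.exists_pos_sum_of_countable
    (ENNReal.coe_ne_zero.2 hε.ne') ℕ
  choose x y hxy hsub hle using fun i => enlarge h0 (t i) (hd i) (hε' i)
  obtain ⟨T, hT⟩ := finite_cover hq0 hq1 h0 h1 hn hm x y hxy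
    (ht.trans (Set.iUnion_mono hsub))
  rw [← Finset.mul_sum, ← hK] at hT
  have h2 : K⁻¹ ≤ ∑ i ∈ T, (y i - x i) ^ h := by
    rw [inv_le_iff_one_le_mul₀ hKpos]; linarith
  calc ENNReal.ofReal K⁻¹ ≤ ENNReal.ofReal (∑ i ∈ T, (y i - x i) ^ h) :=
        ENNReal.ofReal_le_ofReal h2
    _ = ∑ i ∈ T, ENNReal.ofReal ((y i - x i) ^ h) :=
        ENNReal.ofReal_sum_of_nonneg (fun i _ => Real.rpow_nonneg (by linarith [hxy i]) _)
    _ ≤ ∑ i ∈ T, ((⨆ _ : (t i).Nonempty, Metric.ediam (t i) ^ h) + ε' i) :=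
        Finset.sum_le_sum fun i _ => hle i
    _ ≤ ∑' i, ((⨆ _ : (t i).Nonempty, Metric.ediam (t i) ^ h) + ε' i) := ENNReal.sum_le_tsum _
    _ = (∑' i, ⨆ _ : (t i).Nonempty, Metric.ediam (t i) ^ h) + ∑' i, (ε' i : ENNReal) :=
        ENNReal.tsum_add
    _ ≤ _ := by gcongr

lemma upper_bound (hq0 : 0 < q) (hq1 : q < 1) (h0 : 0 < h)
    (hm : ∑ k ∈ Finset.Icc 1 n, aa q k ^ h = 1) :
    μH[h] (limitSet (gq q) n) ≤ 1 := by
  have hw : ∀ (l : ℕ) (f : Fin (l + 1) → Fin n), ∀ i ∈ List.ofFn (fun j => (f j : ℕ) + 1), 1 ≤ i := by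
    intro l f i hi
    rw [List.mem_ofFn] at hi
    obtain ⟨j, rfl⟩ := hi
    omega
  have hdiam : ∀ (l : ℕ) (f : Fin (l + 1) → Fin n),
      Metric.ediam (wordComp (gq q) (List.ofFn (fun j => (f j : ℕ) + 1)) '' Icc (0:ℝ) 1)
        ≤ ENNReal.ofReal ((List.ofFn (fun j => (f j : ℕ) + 1)).map (aa q)).prod := by
    intro l f
    obtain ⟨p1, p2⟩ := prod_nonneg' hq0 hq1 _ (hw l f)
    apply Metric.ediam_le
    rintro _ ⟨u, hu, rfl⟩ _ ⟨v, hv, rfl⟩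
    rw [edist_dist, Real.dist_eq, wc_dist hq0 hq1 _ (hw l f)]
    apply ENNReal.ofReal_le_ofReal
    apply mul_le_of_le_one_right p1
    rw [abs_le]
    constructor <;> linarith [hu.1, hu.2, hv.1, hv.2]
  have key := Measure.hausdorffMeasure_le_liminf_sum (β := ℕ) (ι := fun l => (Fin (l + 1) → Fin n)) h
    (limitSet (gq q) n) (l := atTop) (fun l => ENNReal.ofReal ((1 - q) ^ (l + 1)))
    (by
      rw [← ENNReal.ofReal_zero]
      apply ENNReal.tendsto_ofReal
      exact (tendsto_pow_atTop_nhds_zero_of_lt_one (by linarith) (by linarith)).comp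
        (tendsto_add_atTop_nat 1))
    (fun l f => wordComp (gq q) (List.ofFn (fun j => (f j : ℕ) + 1)) '' Icc (0:ℝ) 1)
    (by
      refine Eventually.of_forall fun l f => (hdiam l f).trans (ENNReal.ofReal_le_ofReal ?_)
      have := (prod_nonneg' hq0 hq1 _ (hw l f)).2
      simpa using this)
    (by
      refine Eventually.of_forall fun l z hz => ?_
      unfold limitSet at hz
      rw [Set.mem_iInter] at hz
      obtain ⟨w, ⟨hw1, hw2⟩, hz⟩ := Set.mem_iUnion₂.1 (hz l)
      have hlt : ∀ j : Fin (l + 1), w[j]'(by omega) - 1 < n := fun j => by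
        have := hw2 (w[j]'(by omega)) (List.getElem_mem _)
        omega
      refine Set.mem_iUnion.2 ⟨fun j => ⟨w[j]'(by omega) - 1, hlt j⟩, ?_⟩
      have : List.ofFn (fun j : Fin (l + 1) => (w[j]'(by omega) - 1) + 1) = w := by
        apply List.ext_getElem
        · simp [hw1]
        · intro i h1 h2
          have := hw2 w[i] (List.getElem_mem _)
          rw [List.getElem_ofFn]
          simp only [Fin.getElem_fin]
          omega
      simp only
      rw [this]; exact hz)
  refine key.trans ?_
  refine (liminf_le_liminf (v := fun _ => (1 : ENNReal)) ?_).trans (by simp)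
  refine Eventually.of_forall fun l => ?_
  have e1 : ∑ f : Fin (l + 1) → Fin n, ∏ i, aa q ((f i : ℕ) + 1) ^ h = 1 := by
    rw [← Fintype.sum_pow (fun k : Fin n => aa q ((k : ℕ) + 1) ^ h),
      Fin.sum_univ_eq_sum_range (fun k => aa q (k + 1) ^ h) n]
    have : ∑ k ∈ Finset.range n, aa q (k + 1) ^ h = 1 := by
      rw [← hm, Finset.range_eq_Ico, Finset.sum_Ico_add' (fun k => aa q k ^ h) 0 n 1]
      rfl
    rw [this, one_pow]
  have e2 : (1 : ENNReal) = ENNReal.ofReal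
      (∑ f : Fin (l + 1) → Fin n, ∏ i, aa q ((f i : ℕ) + 1) ^ h) := by
    rw [e1, ENNReal.ofReal_one]
  rw [e2, ENNReal.ofReal_sum_of_nonneg]
  · apply Finset.sum_le_sum
    intro f _
    refine (ENNReal.rpow_le_rpow (hdiam l f) h0.le).trans ?_
    have p1 := (prod_nonneg' hq0 hq1 _ (hw l f)).1
    rw [ENNReal.ofReal_rpow_of_nonneg p1 h0.le]
    apply ENNReal.ofReal_le_ofReal
    rw [List.map_ofFn, List.prod_ofFn, ← Real.finsetProd_rpow]
    · simp
    · intro i _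
      exact (aa_pos hq0 hq1 (by simp)).le
  · intro f _
    exact Finset.prod_nonneg fun i _ => Real.rpow_nonneg (aa_pos hq0 hq1 (by simp)).le _

end
section
variable {q : ℝ}

lemma h_le_one (hq0 : 0 < q) (hq1 : q < 1) {n : ℕ} {h : ℝ}
    (hm : ∑ k ∈ Finset.Icc 1 n, aa q k ^ h = 1) : h ≤ 1 := by
  by_contra hc
  push Not at hc
  have e := sum_Ioc hq0 hq1 one_pos (Nat.zero_le n)
  have hC : CC q 1 = 1 := by
    simp only [CC, Real.rpow_one]; exact div_self (by linarith)
  rw [hC] at e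
  simp only [Real.rpow_one, pow_zero, one_mul] at e
  have : ∑ k ∈ Finset.Icc 1 n, aa q k ^ h ≤ ∑ k ∈ Finset.Ioc 0 n, aa q k := by
    apply Finset.sum_le_sum
    intro k hk
    have hk := (Finset.mem_Icc.1 hk).1
    have := Real.rpow_le_rpow_of_exponent_ge (aa_pos hq0 hq1 hk)
      ((aa_le hq0 hq1 hk).trans (by linarith)) hc.le
    simpa using this
  have : 0 < q ^ n := by positivity
  linarith

lemma sum_anti (hq0 : 0 < q) (hq1 : q < 1) {n : ℕ} (hn : 2 ≤ n) {h h2 : ℝ}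
    (hm : ∑ k ∈ Finset.Icc 1 n, aa q k ^ h = 1) (hm2 : 1 ≤ ∑ k ∈ Finset.Icc 1 2, aa q k ^ h2) :
    h2 ≤ h := by
  by_contra hc
  push Not at hc
  have e1 : ∑ k ∈ Finset.Icc 1 2, aa q k ^ h ≤ ∑ k ∈ Finset.Icc 1 n, aa q k ^ h := by
    apply Finset.sum_le_sum_of_subset_of_nonneg
    · exact Finset.Icc_subset_Icc_right hn
    · intro k hk _
      exact Real.rpow_nonneg (aa_pos hq0 hq1 (Finset.mem_Icc.1 hk).1).le _
  have e2 : ∑ k ∈ Finset.Icc 1 2, aa q k ^ h2 < ∑ k ∈ Finset.Icc 1 2, aa q k ^ h := by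
    apply Finset.sum_lt_sum_of_nonempty (by simp)
    intro k hk
    have hk := (Finset.mem_Icc.1 hk).1
    exact Real.rpow_lt_rpow_of_exponent_gt (aa_pos hq0 hq1 hk)
      ((aa_le hq0 hq1 hk).trans_lt (by linarith)) hc
  linarith

lemma h_pos (hq0 : 0 < q) (hq1 : q < 1) {n : ℕ} (hn : 2 ≤ n) {h : ℝ}
    (hm : ∑ k ∈ Finset.Icc 1 n, aa q k ^ h = 1) : 0 < h := by
  rcases (sum_anti hq0 hq1 hn (h2 := 0) hm (by simp)).eq_or_lt with h0 | h0
  · rw [← h0] at hm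
    simp at hm
    omega
  · exact h0

lemma moran_bound (hq0 : 0 < q) (hq1 : q < 1) {n : ℕ} (hn : 2 ≤ n) {h : ℝ}
    (hm : ∑ k ∈ Finset.Icc 1 n, aa q k ^ h = 1) :
    (1 - h) * (q * (- Real.log q) + (1 - q) * (- Real.log (1 - q))) ≤ (q ^ h) ^ n := by
  have h0 := h_pos hq0 hq1 hn hm
  have hqh := qh_lt hq0 hq1 h0
  have hc0 : 0 < 1 - q := by linarith
  have e := sum_Ioc hq0 hq1 h0 (Nat.zero_le n)
  have e' : (1:ℝ) = CC q h * ((q ^ 0) ^ h - (q ^ n) ^ h) := by rw [← e, ← hm]; rfl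
  rw [CC, pow_zero, Real.one_rpow, div_mul_eq_mul_div, eq_div_iff (by linarith)] at e'
  have comm : (q ^ n) ^ h = (q ^ h) ^ n := by
    rw [← Real.rpow_natCast, ← Real.rpow_mul hq0.le, mul_comm, Real.rpow_mul hq0.le,
      Real.rpow_natCast]
  rw [comm] at e'
  have lb : ∀ t : ℝ, 0 < t → t + (1 - h) * (t * (- Real.log t)) ≤ t ^ h := by
    intro t ht
    have : t ^ h = t * Real.exp ((1 - h) * (- Real.log t)) := by
      rw [Real.rpow_def_of_pos ht]
      conv_rhs => rw [← Real.exp_log ht, ← Real.exp_add, Real.exp_log ht]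
      congr 1; ring
    rw [this]
    nlinarith [Real.add_one_le_exp ((1 - h) * (- Real.log t))]
  have l1 := lb q hq0
  have l2 := lb (1 - q) hc0
  have c1 : (1 - q) ^ h ≤ 1 := Real.rpow_le_one hc0.le (by linarith) h0.le
  have : 0 ≤ (q ^ h) ^ n := by positivity
  nlinarith

lemma CC_tendsto (hq0 : 0 < q) (hq1 : q < 1) : Tendsto (fun h => CC q h) (𝓝 1) (𝓝 1) := by
  have c : ContinuousAt (fun h => CC q h) 1 := by
    unfold CC
    apply ContinuousAt.div
    · exact Real.continuousAt_const_rpow (by linarith)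
    · exact continuousAt_const.sub (Real.continuousAt_const_rpow hq0.ne')
    · rw [Real.rpow_one]; linarith
  have := c.tendsto
  have hC : CC q 1 = 1 := by
    simp only [CC, Real.rpow_one]; exact div_self (by linarith)
  rwa [hC] at this

end

/-- For `b_k = q^k` with `0 < q < 1`, conditions (C1) and (C2) hold, and consequently
    `lim_{n→∞} H_{h_n}(J_n) = 1`. -/
theorem geometric_example
    (q : ℝ) (hq0 : 0 < q) (hq1 : q < 1)
    (b : ℕ → ℝ) (h : ℕ → ℝ)
    (hb : ∀ k : ℕ, b k = q ^ k)
    (hmoran : ∀ n, 1 ≤ n → ∑ k ∈ Finset.Icc 1 n, (b (k - 1) - b k) ^ h n = 1)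
    (hdimH : ∀ n, 1 ≤ n → dimH (limitSet (gAff b) n) = ENNReal.ofReal (h n)) :
    Filter.Tendsto (fun n : ℕ => (1 - h n) * Real.log n) Filter.atTop (nhds 0) ∧
    (∃ M : ℝ, ∀ k : ℕ, (b k - b (k + 1)) / b (k + 1) ≤ M) ∧
    Filter.Tendsto (fun n : ℕ => μH[h n] (limitSet (gAff b) n)) Filter.atTop (nhds 1) := by
  obtain rfl : b = fun k => q ^ k := funext hb
  have hm : ∀ n, 1 ≤ n → ∑ k ∈ Finset.Icc 1 n, aa q k ^ h n = 1 := hmoran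
  have hc0 : 0 < 1 - q := by linarith
  have hpos : ∀ n, 2 ≤ n → 0 < h n := fun n hn => h_pos hq0 hq1 hn (hm n (by omega))
  have hle : ∀ n, 2 ≤ n → h n ≤ 1 := fun n hn => h_le_one hq0 hq1 (hm n (by omega))
  set κ := q * (- Real.log q) + (1 - q) * (- Real.log (1 - q)) with hκ
  have hκpos : 0 < κ := by
    have := Real.log_neg hq0 hq1
    have := Real.log_neg hc0 (by linarith)
    have := mul_pos hq0 (by linarith : 0 < - Real.log q)
    have := mul_pos hc0 (by linarith : 0 < - Real.log (1 - q))
    linarith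
  set r := q ^ h 2 with hr
  have hr0 : 0 ≤ r := by positivity
  have hr1 : r < 1 := qh_lt hq0 hq1 (hpos 2 le_rfl)
  have hd : ∀ n, 2 ≤ n → 1 - h n ≤ κ⁻¹ * r ^ n := by
    intro n hn
    have h1 := moran_bound hq0 hq1 hn (hm n (by omega))
    have h2 : h 2 ≤ h n := sum_anti hq0 hq1 hn (hm n (by omega)) (hm 2 (by norm_num)).ge
    have h3 : (q ^ h n) ^ n ≤ r ^ n := by
      apply pow_le_pow_left₀ (by positivity)
      exact Real.rpow_le_rpow_of_exponent_ge hq0 hq1.le h2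
    rw [inv_mul_eq_div, le_div_iff₀ hκpos]
    linarith
  have hC1 : Tendsto (fun n : ℕ => (1 - h n) * Real.log n) atTop (𝓝 0) := by
    have lim : Tendsto (fun n : ℕ => κ⁻¹ * ((n : ℝ) * r ^ n)) atTop (𝓝 0) := by
      simpa using (tendsto_self_mul_const_pow_of_lt_one hr0 hr1).const_mul κ⁻¹
    refine tendsto_of_tendsto_of_tendsto_of_le_of_le' tendsto_const_nhds lim ?_ ?_
    · filter_upwards [eventually_ge_atTop 2] with n hn
      exact mul_nonneg (by linarith [hle n hn]) (Real.log_natCast_nonneg n)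
    · filter_upwards [eventually_ge_atTop 2] with n hn
      have l1 : Real.log n ≤ n := Real.log_le_self (by positivity)
      calc (1 - h n) * Real.log n ≤ (κ⁻¹ * r ^ n) * n :=
            mul_le_mul (hd n hn) l1 (Real.log_natCast_nonneg n) (by positivity)
        _ = _ := by ring
  have hh : Tendsto h atTop (𝓝 1) := by
    have lim : Tendsto (fun n : ℕ => 1 - κ⁻¹ * r ^ n) atTop (𝓝 1) := by
      simpa using ((tendsto_pow_atTop_nhds_zero_of_lt_one hr0 hr1).const_mul κ⁻¹).const_sub 1
    refine tendsto_of_tendsto_of_tendsto_of_le_of_le' lim tendsto_const_nhds ?_ ?_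
    · filter_upwards [eventually_ge_atTop 2] with n hn
      linarith [hd n hn]
    · filter_upwards [eventually_ge_atTop 2] with n hn
      exact hle n hn
  refine ⟨hC1, ⟨(1 - q) / q, fun k => ?_⟩, ?_⟩
  · apply le_of_eq
    simp only [pow_succ]
    have : q ^ k ≠ 0 := by positivity
    field_simp
  · have limK : Tendsto (fun t : ℝ => ENNReal.ofReal (3 ^ (1 - t) * PP q t)⁻¹) (𝓝 1) (𝓝 1) := by
      have c3 : Tendsto (fun t : ℝ => (3:ℝ) ^ (1 - t)) (𝓝 1) (𝓝 1) := by
        have : Continuous (fun t : ℝ => (3:ℝ) ^ (1 - t)) := by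
          apply Continuous.rpow continuous_const (by fun_prop)
          intro; left; norm_num
        simpa using this.tendsto 1
      have cP : Tendsto (fun t : ℝ => PP q t) (𝓝 1) (𝓝 1) := by
        have c1 := CC_tendsto hq0 hq1
        have c2 := CC_tendsto (q := 1 - q) hc0 (by linarith)
        simpa [PP] using c1.mul (c1.mul c2)
      have := ENNReal.tendsto_ofReal ((c3.mul cP).inv₀ (by norm_num))
      simpa using this
    refine tendsto_of_tendsto_of_tendsto_of_le_of_le' (limK.comp hh) tendsto_const_nhds ?_ ?_
    · filter_upwards [eventually_ge_atTop 2] with n hn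
      exact lower_bound hq0 hq1 (hpos n hn) (hle n hn) (by omega) (hm n (by omega))
    · filter_upwards [eventually_ge_atTop 2] with n hn
      exact upper_bound hq0 hq1 (hpos n hn) (hm n (by omega))
end
end

section
/- Let α > 0 and b_k = 1/(k+1)^α for k ≥ 0. Then, in the linear setting, conditions (C1): lim_{n→∞} (1 − h_n)·ln n = 0 and (C2): sup_{k≥0} (b_k − b_{k+1})/b_{k+1} < ∞ both hold; consequently lim_{n→∞} H_{h_n}(J_n) = 1. -/
open Set Filter MeasureTheory Topology

noncomputable section

structure Good (b : ℕ → ℝ) (n : ℕ) (p : ℕ → ℝ) (h D θ K : ℝ) : Prop where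
  anti : StrictAnti b
  b0 : b 0 = 1
  bpos : ∀ k, 0 < b k
  hpos : 0 < h
  hle : h ≤ 1
  ph : ∀ k, p k = (b k - b (k+1)) ^ h
  psum : ∑ k ∈ Finset.range n, p k = 1
  pD : ∀ k < n, p k ≤ D * (b k - b (k+1))
  D1 : 1 ≤ D
  th0 : 0 ≤ θ
  th1 : θ < 1
  hth : ∀ k, b k - b (k+1) ≤ θ * b k
  K1 : 1 ≤ K
  hK : D * (1 - θ + θ * D * K) ≤ K

structure HInv (h D K : ℝ) (f : ℝ → ℝ) : Prop where
  mono : Monotone f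
  zero : ∀ x ≤ 0, f x = 0
  one : ∀ x, 1 ≤ x → f x = 1
  lin0 : ∀ t, 0 ≤ t → f t ≤ K * t
  lin1 : ∀ s, s ≤ 1 → 1 - f s ≤ D * K * (1 - s)
  hol : ∀ x y, 0 ≤ x → x ≤ y → y ≤ 1 → f y - f x ≤ D ^ 2 * K * (y - x) ^ h

def LL (b : ℕ → ℝ) (x y : ℝ) (k : ℕ) : ℝ := max x (min y (b k)) - max x (min y (b (k+1)))

def uu (b : ℕ → ℝ) (k : ℕ) (x : ℝ) : ℝ := (b k - x) / (b k - b (k+1))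

def TT (b p : ℕ → ℝ) (n : ℕ) (f : ℝ → ℝ) (x : ℝ) : ℝ :=
  ∑ k ∈ Finset.range n, p k * (1 - f (uu b k x))

lemma LL_sum (b : ℕ → ℝ) (x y : ℝ) (n : ℕ) (hxy : x ≤ y) :
    ∑ k ∈ Finset.range n, LL b x y k ≤ y - x := by
  unfold LL
  rw [Finset.sum_range_sub' (fun k => max x (min y (b k)))]
  have h1 : max x (min y (b 0)) ≤ y := max_le hxy (min_le_left _ _)
  have h2 : x ≤ max x (min y (b n)) := le_max_left _ _
  linarith

section
variable {b : ℕ → ℝ} {n : ℕ} {p : ℕ → ℝ} {h D θ K : ℝ}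

lemma Good.apos (G : Good b n p h D θ K) (k : ℕ) : 0 < b k - b (k+1) :=
  sub_pos.2 (G.anti (Nat.lt_succ_self k))

lemma Good.ppos (G : Good b n p h D θ K) (k : ℕ) : 0 < p k := by
  rw [G.ph]; exact Real.rpow_pos_of_pos (G.apos k) _

lemma LL_nonneg (G : Good b n p h D θ K) (x y : ℝ) (k : ℕ) : 0 ≤ LL b x y k := by
  have := G.apos k
  unfold LL
  have : max x (min y (b (k+1))) ≤ max x (min y (b k)) :=
    max_le_max le_rfl (min_le_min le_rfl (by linarith))
  linarith

lemma uu_ge (G : Good b n p h D θ K) {k : ℕ} {x : ℝ} (hx : x ≤ b (k+1)) : 1 ≤ uu b k x := by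
  unfold uu
  rw [le_div_iff₀ (G.apos k)]; linarith

lemma uu_le (G : Good b n p h D θ K) {k : ℕ} {x : ℝ} (hx : b k ≤ x) : uu b k x ≤ 0 := by
  unfold uu
  exact div_nonpos_of_nonpos_of_nonneg (by linarith) (G.apos k).le

lemma uu_mul (G : Good b n p h D θ K) (k : ℕ) (x : ℝ) :
    uu b k x * (b k - b (k+1)) = b k - x := by
  unfold uu
  exact div_mul_cancel₀ _ (G.apos k).ne'

lemma HInv.nonneg {f : ℝ → ℝ} (I : HInv h D K f) (x : ℝ) : 0 ≤ f x := by
  have := I.mono (min_le_left x 0)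
  rwa [I.zero _ (min_le_right x 0)] at this

lemma HInv.le_one {f : ℝ → ℝ} (I : HInv h D K f) (x : ℝ) : f x ≤ 1 := by
  have := I.mono (le_max_left x 1)
  rwa [I.one _ (le_max_right x 1)] at this

lemma uu_anti (G : Good b n p h D θ K) (k : ℕ) {x y : ℝ} (hxy : x ≤ y) : uu b k y ≤ uu b k x := by
  unfold uu
  exact div_le_div_of_nonneg_right (by linarith) (G.apos k).le

lemma p_mul (G : Good b n p h D θ K) {k : ℕ} (hk : k < n) {X c L : ℝ} (hX : 0 ≤ X)
    (h1 : X * (b k - b (k+1)) ≤ c * L) : p k * X ≤ D * c * L := by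
  have h2 := mul_le_mul_of_nonneg_right (G.pD k hk) hX
  have h3 := mul_le_mul_of_nonneg_left h1 (by linarith [G.D1] : (0:ℝ) ≤ D)
  linarith

/-- right case -/
lemma term_right (G : Good b n p h D θ K) {f : ℝ → ℝ} (I : HInv h D K f) {k : ℕ} {x y : ℝ}
    (hxy : x ≤ y) (hy : b k ≤ y) :
    (f (uu b k x) - f (uu b k y)) * (b k - b (k+1)) ≤ K * LL b x y k := by
  have ha := G.apos k
  have hK := G.K1
  rw [I.zero _ (uu_le G hy), sub_zero]
  unfold LL
  rw [min_eq_right hy, min_eq_right (by linarith : b (k+1) ≤ y)]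
  rcases le_total x (b (k+1)) with h1 | h1
  · rw [I.one _ (uu_ge G h1), max_eq_right h1, max_eq_right (by linarith)]
    nlinarith
  rw [max_eq_left h1]
  rcases le_total x (b k) with h2 | h2
  · rw [max_eq_right h2]
    have h0 : 0 ≤ uu b k x := div_nonneg (by linarith) ha.le
    have h3 := mul_le_mul_of_nonneg_right (I.lin0 _ h0) ha.le
    rw [mul_assoc, uu_mul G] at h3
    exact h3
  · rw [max_eq_left h2, I.zero _ (uu_le G h2)]
    simp

/-- left case -/
lemma term_left (G : Good b n p h D θ K) {f : ℝ → ℝ} (I : HInv h D K f) {k : ℕ} {x y : ℝ}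
    (hxy : x ≤ y) (hx : x ≤ b (k+1)) :
    (f (uu b k x) - f (uu b k y)) * (b k - b (k+1)) ≤ D * K * LL b x y k := by
  have ha := G.apos k
  have hK := G.K1
  have hD := G.D1
  have hDK : 1 ≤ D * K := by nlinarith
  rw [I.one _ (uu_ge G hx)]
  unfold LL
  rw [max_eq_right (le_min hxy (by linarith : x ≤ b k)), max_eq_right (le_min hxy hx)]
  rcases le_total y (b (k+1)) with h1 | h1
  · rw [I.one _ (uu_ge G h1), min_eq_left h1, min_eq_left (by linarith)]
    simp
  rw [min_eq_right h1]
  rcases le_total y (b k) with h2 | h2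
  · rw [min_eq_left h2]
    have h0 : uu b k y ≤ 1 := by
      unfold uu
      rw [div_le_one ha]; linarith
    have h3 := mul_le_mul_of_nonneg_right (I.lin1 _ h0) ha.le
    have h4 := uu_mul G k y
    have h5 : D * K * (1 - uu b k y) * (b k - b (k+1)) = D * K * (y - b (k+1)) := by
      rw [mul_assoc]; congr 1; linarith
    linarith
  · rw [min_eq_right h2, I.zero _ (uu_le G h2)]
    nlinarith

lemma term_any (G : Good b n p h D θ K) {f : ℝ → ℝ} (I : HInv h D K f) {k : ℕ} (hk : k < n)
    {x y : ℝ} (hxy : x ≤ y) (hc : x ≤ b (k+1) ∨ b k ≤ y) :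
    p k * (f (uu b k x) - f (uu b k y)) ≤ D ^ 2 * K * LL b x y k := by
  have hX : 0 ≤ f (uu b k x) - f (uu b k y) := sub_nonneg.2 (I.mono (uu_anti G k hxy))
  have hL := LL_nonneg G x y k
  have hK := G.K1
  have hD := G.D1
  have : p k * (f (uu b k x) - f (uu b k y)) ≤ D * (D * K) * LL b x y k := by
    apply p_mul G hk hX
    rcases hc with hc | hc
    · exact term_left G I hxy hc
    · refine (term_right G I hxy hc).trans ?_
      apply mul_le_mul_of_nonneg_right _ hL
      nlinarith
  calc _ ≤ _ := this
    _ = _ := by ring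

lemma TT_sub (b p : ℕ → ℝ) (n : ℕ) (f : ℝ → ℝ) (x y : ℝ) :
    TT b p n f y - TT b p n f x
      = ∑ k ∈ Finset.range n, p k * (f (uu b k x) - f (uu b k y)) := by
  unfold TT
  rw [← Finset.sum_sub_distrib]
  apply Finset.sum_congr rfl; intros; ring

lemma TT_zero (G : Good b n p h D θ K) {f : ℝ → ℝ} (I : HInv h D K f) {x : ℝ} (hx : x ≤ 0) :
    TT b p n f x = 0 := by
  unfold TT
  apply Finset.sum_eq_zero
  intro k _
  rw [I.one _ (uu_ge G (hx.trans (G.bpos _).le))]; simp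

lemma Good.b_le (G : Good b n p h D θ K) (k : ℕ) : b k ≤ 1 := by
  rw [← G.b0]; exact G.anti.antitone (Nat.zero_le k)

lemma TT_one (G : Good b n p h D θ K) {f : ℝ → ℝ} (I : HInv h D K f) {x : ℝ} (hx : 1 ≤ x) :
    TT b p n f x = 1 := by
  unfold TT
  refine Eq.trans ?_ G.psum
  apply Finset.sum_congr rfl
  intro k _
  rw [I.zero _ (uu_le G ((G.b_le k).trans hx))]; simp

lemma TT_inv (G : Good b n p h D θ K) {f : ℝ → ℝ} (I : HInv h D K f) :
    HInv h D K (TT b p n f) := by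
  have hK := G.K1
  have hD := G.D1
  have hDK : 1 ≤ D * K := by nlinarith
  have ht0 := G.th0
  have ht1 := G.th1
  refine ⟨?_, fun x hx => TT_zero G I hx, fun x hx => TT_one G I hx, ?_, ?_, ?_⟩
  · intro x y hxy
    have : 0 ≤ TT b p n f y - TT b p n f x := by
      rw [TT_sub]
      apply Finset.sum_nonneg
      intro k _
      exact mul_nonneg (G.ppos k).le (sub_nonneg.2 (I.mono (uu_anti G k hxy)))
    linarith
  · intro t ht
    have h0 : TT b p n f t = TT b p n f t - TT b p n f 0 := by
      rw [TT_zero G I le_rfl, sub_zero]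
    rw [h0, TT_sub]
    have hLs := LL_sum b 0 t n ht
    have key : ∀ k ∈ Finset.range n, ¬ (b (k+1) < t ∧ t < b k) →
        p k * (f (uu b k 0) - f (uu b k t)) ≤ D * LL b 0 t k := by
      intro k hk hc
      have ha := G.apos k
      have hb := G.bpos (k+1)
      rw [I.one _ (uu_ge G hb.le)]
      by_cases h1 : b (k+1) < t
      · have h2 : b k ≤ t := by
          by_contra h3; exact hc ⟨h1, not_le.1 h3⟩
        rw [I.zero _ (uu_le G h2)]
        unfold LL
        rw [min_eq_right h2, min_eq_right h1.le, max_eq_right (by linarith), max_eq_right hb.le]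
        linarith [G.pD k (Finset.mem_range.1 hk)]
      · rw [I.one _ (uu_ge G (not_lt.1 h1))]
        have := LL_nonneg G 0 t k
        nlinarith
    by_cases hex : ∃ k ∈ Finset.range n, b (k+1) < t ∧ t < b k
    · obtain ⟨k, hk, h1, h2⟩ := hex
      have hrest : ∑ j ∈ (Finset.range n).erase k, p j * (f (uu b j 0) - f (uu b j t))
          ≤ ∑ j ∈ (Finset.range n).erase k, D * LL b 0 t j := by
        apply Finset.sum_le_sum
        intro j hj
        rw [Finset.mem_erase] at hj
        apply key j hj.2
        rintro ⟨h3, h4⟩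
        rcases lt_or_gt_of_ne hj.1 with h5 | h5
        · have := G.anti.antitone (show j + 1 ≤ k by omega)
          linarith
        · have := G.anti.antitone (show k + 1 ≤ j by omega)
          linarith
      have hk' := term_any G I (Finset.mem_range.1 hk) ht (Or.inl (G.bpos (k+1)).le)
      rw [← Finset.mul_sum] at hrest
      rw [← Finset.add_sum_erase _ _ hk] at hLs
      rw [← Finset.add_sum_erase _ _ hk]
      have hLk : LL b 0 t k = t - b (k+1) := by
        unfold LL
        rw [min_eq_left h2.le, min_eq_right h1.le, max_eq_right ht, max_eq_right (G.bpos _).le]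
      have h6 : LL b 0 t k ≤ θ * t := by
        rw [hLk]
        have := G.hth k
        nlinarith
      have hS : ∑ j ∈ (Finset.range n).erase k, LL b 0 t j ≤ t - LL b 0 t k := by linarith
      have h7 := mul_le_mul_of_nonneg_left hS (by linarith : (0:ℝ) ≤ D)
      have h8 := mul_le_mul_of_nonneg_left h6 (by nlinarith : (0:ℝ) ≤ D * (D * K - 1))
      have h9 := mul_le_mul_of_nonneg_right G.hK ht
      nlinarith
    · push Not at hex
      have h1 : ∑ k ∈ Finset.range n, p k * (f (uu b k 0) - f (uu b k t))
          ≤ ∑ k ∈ Finset.range n, D * LL b 0 t k := by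
        apply Finset.sum_le_sum
        intro k hk
        apply key k hk
        rintro ⟨h1, h2⟩
        exact absurd h2 (not_lt.2 (hex k hk h1))
      rw [← Finset.mul_sum] at h1
      have hDK' : D ≤ K := by
        have := G.hK
        nlinarith [mul_nonneg (mul_nonneg (by linarith : (0:ℝ) ≤ D) ht0) (by linarith : 0 ≤ D * K - 1)]
      nlinarith
  · intro s hs
    have h0 : 1 - TT b p n f s = TT b p n f 1 - TT b p n f s := by
      rw [TT_one G I le_rfl]
    rw [h0, TT_sub]
    have h1 : ∑ k ∈ Finset.range n, p k * (f (uu b k s) - f (uu b k 1))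
          ≤ ∑ k ∈ Finset.range n, D * K * LL b s 1 k := by
      apply Finset.sum_le_sum
      intro k hk
      apply p_mul G (Finset.mem_range.1 hk) (sub_nonneg.2 (I.mono (uu_anti G k hs)))
      exact term_right G I hs (G.b_le k)
    rw [← Finset.mul_sum] at h1
    have hLs := LL_sum b s 1 n hs
    nlinarith
  · intro x y hx hxy hy
    rw [TT_sub]
    by_cases hex : ∃ k ∈ Finset.range n, b (k+1) < x ∧ y < b k
    · obtain ⟨k, hk, h1, h2⟩ := hex
      have ha := G.apos k
      rw [Finset.sum_eq_single_of_mem k hk]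
      · have h3 : 0 ≤ uu b k y := div_nonneg (by linarith) ha.le
        have h4 : uu b k x ≤ 1 := by
          unfold uu
          rw [div_le_one ha]; linarith
        have h5 := I.hol _ _ h3 (uu_anti G k hxy) h4
        have h6 : uu b k x - uu b k y = (y - x) / (b k - b (k+1)) := by
          unfold uu
          rw [← sub_div]; congr 1; ring
        rw [h6, Real.div_rpow (by linarith) ha.le, ← G.ph] at h5
        have h7 := mul_le_mul_of_nonneg_left h5 (G.ppos k).le
        refine h7.trans (le_of_eq ?_)
        have := (G.ppos k).ne'
        field_simp
      · intro j hj hjk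
        rcases lt_or_gt_of_ne hjk with h5 | h5
        · have := G.anti.antitone (show j + 1 ≤ k by omega)
          rw [I.one _ (uu_ge G (by linarith)), I.one _ (uu_ge G (by linarith))]; simp
        · have := G.anti.antitone (show k + 1 ≤ j by omega)
          rw [I.zero _ (uu_le G (by linarith)), I.zero _ (uu_le G (by linarith))]; simp
    · push Not at hex
      have h1 : ∑ k ∈ Finset.range n, p k * (f (uu b k x) - f (uu b k y))
          ≤ ∑ k ∈ Finset.range n, D ^ 2 * K * LL b x y k := by
        apply Finset.sum_le_sum
        intro k hk
        apply term_any G I (Finset.mem_range.1 hk) hxy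
        by_cases h2 : x ≤ b (k+1)
        · exact Or.inl h2
        · exact Or.inr (hex k hk (not_le.1 h2))
      rw [← Finset.mul_sum] at h1
      have hLs := LL_sum b x y n hxy
      have h3 : y - x ≤ (y - x) ^ h := by
        rcases eq_or_lt_of_le hxy with h4 | h4
        · rw [h4, sub_self, Real.zero_rpow G.hpos.ne']
        · conv_lhs => rw [← Real.rpow_one (y - x)]
          exact Real.rpow_le_rpow_of_exponent_ge (by linarith) (by linarith) G.hle
      exact h1.trans (mul_le_mul_of_nonneg_left (hLs.trans h3) (by positivity))

lemma clamp_inv (G : Good b n p h D θ K) : HInv h D K (fun x => max 0 (min x 1)) := by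
  have hK := G.K1
  have hD := G.D1
  have hDK : 1 ≤ D * K := by nlinarith
  have hDK2 : 1 ≤ D ^ 2 * K := by nlinarith
  refine ⟨?_, ?_, ?_, ?_, ?_, ?_⟩
  · intro x y hxy
    exact max_le_max le_rfl (min_le_min hxy le_rfl)
  · intro x hx
    exact max_eq_left ((min_le_left _ _).trans hx)
  · intro x hx
    simp [min_eq_right hx]
  · intro t ht
    apply max_le (by nlinarith) ((min_le_left _ _).trans (by nlinarith))
  · intro s hs
    have : s ≤ max 0 (min s 1) := by rw [min_eq_left hs]; exact le_max_right _ _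
    nlinarith
  · intro x y hx hxy hy
    rw [min_eq_left hy, min_eq_left (hxy.trans hy), max_eq_right hx, max_eq_right (hx.trans hxy)]
    have h3 : y - x ≤ (y - x) ^ h := by
        rcases eq_or_lt_of_le hxy with h4 | h4
        · rw [h4, sub_self, Real.zero_rpow G.hpos.ne']
        · conv_lhs => rw [← Real.rpow_one (y - x)]
          exact Real.rpow_le_rpow_of_exponent_ge (by linarith) (by linarith) G.hle
    nlinarith

def EE (b : ℕ → ℝ) (n : ℕ) : ℕ → Set ℝ
  | 0 => Set.Icc 0 1
  | l + 1 => ⋃ k ∈ Finset.range n, gAff b (k+1) '' EE b n l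

def PH (b p : ℕ → ℝ) (n : ℕ) : ℕ → ℝ → ℝ
  | 0 => fun x => max 0 (min x 1)
  | l + 1 => TT b p n (PH b p n l)

lemma PH_inv (G : Good b n p h D θ K) (l : ℕ) : HInv h D K (PH b p n l) := by
  induction l with
  | zero => exact clamp_inv G
  | succ l ih => exact TT_inv G ih

lemma EE_eq (b : ℕ → ℝ) (n l : ℕ) : EE b n l =
    ⋃ w ∈ {w : List ℕ | w.length = l ∧ ∀ i ∈ w, 1 ≤ i ∧ i ≤ n},
      wordComp (gAff b) w '' Set.Icc (0 : ℝ) 1 := by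
  induction l with
  | zero =>
    ext x
    simp only [EE, mem_iUnion, mem_ofPred_eq, exists_prop]
    constructor
    · intro hx
      exact ⟨[], by simp, x, hx, rfl⟩
    · rintro ⟨w, ⟨hw, -⟩, y, hy, rfl⟩
      rw [List.length_eq_zero_iff] at hw
      subst hw
      exact hy
  | succ l ih =>
    ext x
    simp only [EE, ih, mem_iUnion, mem_ofPred_eq, exists_prop, mem_image]
    constructor
    · rintro ⟨k, hk, y, ⟨w, ⟨hw, hw'⟩, z, hz, rfl⟩, rfl⟩
      refine ⟨(k+1) :: w, ⟨by simp [hw], ?_⟩, z, hz, rfl⟩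
      intro i hi
      rcases List.mem_cons.1 hi with rfl | hi
      · have := Finset.mem_range.1 hk
        omega
      · exact hw' i hi
    · rintro ⟨w, ⟨hw, hw'⟩, z, hz, rfl⟩
      match w, hw, hw' with
      | k :: w, hw, hw' =>
        have hk := hw' k (by simp)
        refine ⟨k - 1, Finset.mem_range.2 (by omega), _,
          ⟨w, ⟨by simpa using hw, fun i hi => hw' i (by simp [hi])⟩, z, hz, rfl⟩, ?_⟩
        rw [Nat.sub_add_cancel hk.1]
        rfl

lemma limitSet_eq (b : ℕ → ℝ) (n : ℕ) : limitSet (gAff b) n = ⋂ l, EE b n (l+1) := by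
  unfold limitSet
  simp only [EE_eq]

lemma gAff_succ (b : ℕ → ℝ) (k : ℕ) (x : ℝ) :
    gAff b (k+1) x = b k - (b k - b (k+1)) * x := rfl

lemma EE_sub_Icc (G : Good b n p h D θ K) (l : ℕ) : EE b n l ⊆ Icc 0 1 := by
  induction l with
  | zero => exact subset_rfl
  | succ l ih =>
    intro x hx
    simp only [EE, mem_iUnion, exists_prop, mem_image] at hx
    obtain ⟨k, -, y, hy, rfl⟩ := hx
    have hy' := ih hy
    have ha := G.apos k
    have := G.bpos (k+1)
    have := G.b_le k
    rw [gAff_succ]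
    constructor <;> nlinarith [hy'.1, hy'.2]

lemma EE_anti (G : Good b n p h D θ K) : Antitone (EE b n) := by
  apply antitone_nat_of_succ_le
  intro l
  induction l with
  | zero => exact EE_sub_Icc G 1
  | succ l ih =>
    exact iUnion₂_mono fun k _ => image_mono ih

lemma EE_compact (b : ℕ → ℝ) (n l : ℕ) : IsCompact (EE b n l) := by
  induction l with
  | zero => exact isCompact_Icc
  | succ l ih =>
    apply Finset.isCompact_biUnion
    intro k _
    apply ih.image
    unfold gAff
    fun_prop

lemma limitSet_eq' (G : Good b n p h D θ K) : limitSet (gAff b) n = ⋂ l, EE b n l := by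
  rw [limitSet_eq]
  apply subset_antisymm
  · apply subset_iInter
    intro l
    exact (iInter_subset _ l).trans (EE_anti G (Nat.le_succ l))
  · apply subset_iInter
    intro l
    exact iInter_subset _ (l+1)

lemma uu_gAff (G : Good b n p h D θ K) (k : ℕ) (x : ℝ) : uu b k (gAff b (k+1) x) = x := by
  rw [gAff_succ]; unfold uu
  rw [div_eq_iff (G.apos k).ne']; ring

lemma exists_level (n : ℕ) (p : ℕ → ℝ) (y : ℝ) (hy0 : 0 ≤ y)
    (hy : y ≤ ∑ k ∈ Finset.range n, p k) (hn : 0 < n) :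
    ∃ k < n, ∑ j ∈ Finset.Ico (k+1) n, p j ≤ y ∧ y ≤ ∑ j ∈ Finset.Ico k n, p j := by
  by_contra hcon
  push Not at hcon
  have : ∀ k ≤ n, y ≤ ∑ j ∈ Finset.Ico k n, p j := by
    intro k
    induction k with
    | zero => intro _; simpa using hy
    | succ k ih =>
      intro hk
      by_contra h1
      have h2 := hcon k (by omega) (not_le.1 h1).le
      exact absurd (ih (by omega)) (not_le.2 h2)
  have h3 := hcon (n-1) (by omega) (by rw [Nat.sub_add_cancel hn]; simpa using hy0)
  exact absurd (this (n-1) (by omega)) (not_le.2 h3)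

lemma Good.npos (G : Good b n p h D θ K) : 0 < n := by
  rcases Nat.eq_zero_or_pos n with h0 | h0
  · have := G.psum
    subst h0
    simp at this
  · exact h0

lemma PH_surj (G : Good b n p h D θ K) (l : ℕ) (y : ℝ) (hy : y ∈ Icc (0:ℝ) 1) :
    ∃ x ∈ EE b n l, PH b p n l x = y := by
  induction l generalizing y with
  | zero => exact ⟨y, hy, by simp [PH, hy.1, hy.2]⟩
  | succ l ih =>
    obtain ⟨k, hk, h1, h2⟩ := exists_level n p y hy.1 (by rw [G.psum]; exact hy.2) G.npos
    have hp := G.ppos k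
    rw [Finset.sum_eq_sum_Ico_succ_bot hk] at h2
    obtain ⟨x, hx, hxy⟩ := ih (1 - (y - ∑ j ∈ Finset.Ico (k+1) n, p j) / p k) (by
      constructor
      · rw [sub_nonneg, div_le_one hp]; linarith
      · have := div_nonneg (sub_nonneg.2 h1) hp.le
        linarith)
    have hx1 := EE_sub_Icc G l hx
    refine ⟨gAff b (k+1) x, ?_, ?_⟩
    · simp only [EE, mem_iUnion, exists_prop, mem_image]
      exact ⟨k, Finset.mem_range.2 hk, x, hx, rfl⟩
    · have I := PH_inv G l
      have ha := G.apos k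
      have hg1 : gAff b (k+1) x ≤ b k := by rw [gAff_succ]; nlinarith [hx1.1]
      have hg2 : b (k+1) ≤ gAff b (k+1) x := by rw [gAff_succ]; nlinarith [hx1.2]
      simp only [PH, TT]
      rw [Finset.range_eq_Ico, ← Finset.sum_Ico_consecutive _ (Nat.zero_le k) hk.le,
        Finset.sum_eq_sum_Ico_succ_bot hk, uu_gAff G, hxy]
      have e1 : ∑ i ∈ Finset.Ico 0 k, p i * (1 - PH b p n l (uu b i (gAff b (k+1) x))) = 0 := by
        apply Finset.sum_eq_zero
        intro j hj
        have := G.anti.antitone (show j + 1 ≤ k from (Finset.mem_Ico.1 hj).2)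
        rw [I.one _ (uu_ge G (by linarith))]; simp
      have e2 : ∑ i ∈ Finset.Ico (k+1) n, p i * (1 - PH b p n l (uu b i (gAff b (k+1) x)))
          = ∑ i ∈ Finset.Ico (k+1) n, p i := by
        apply Finset.sum_congr rfl
        intro j hj
        have := G.anti.antitone (show k + 1 ≤ j from (Finset.mem_Ico.1 hj).1)
        rw [I.zero _ (uu_le G (by linarith))]; simp
      rw [e1, e2]
      field_simp
      ring

lemma HInv.abs {f : ℝ → ℝ} (I : HInv h D K f) {x y : ℝ} (hx : x ∈ Icc (0:ℝ) 1)
    (hy : y ∈ Icc (0:ℝ) 1) : |f x - f y| ≤ D ^ 2 * K * |x - y| ^ h := by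
  rcases le_total x y with h1 | h1
  · rw [abs_sub_comm, abs_sub_comm x y, abs_of_nonneg (sub_nonneg.2 (I.mono h1)),
      abs_of_nonneg (sub_nonneg.2 h1)]
    exact I.hol x y hx.1 h1 hy.2
  · rw [abs_of_nonneg (sub_nonneg.2 (I.mono h1)), abs_of_nonneg (sub_nonneg.2 h1)]
    exact I.hol y x hy.1 h1 hx.2

lemma lower (G : Good b n p h D θ K) :
    1 ≤ ENNReal.ofReal (D ^ 2 * K) * μH[h] (limitSet (gAff b) n) := by
  have hD := G.D1
  have hK := G.K1
  have hC : 0 ≤ D ^ 2 * K := by positivity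
  let U : Ultrafilter ℕ := hyperfilter ℕ
  have hU : (U : Filter ℕ) ≤ atTop := by
    rw [← Nat.cofinite_eq_atTop]; exact hyperfilter_le_cofinite
  have hlim : ∀ (v : ℕ → ℝ), (∀ l, v l ∈ Icc (0:ℝ) 1) →
      ∃ z ∈ Icc (0:ℝ) 1, Tendsto v U (𝓝 z) := by
    intro v hv
    obtain ⟨z, hz, hz'⟩ := isCompact_Icc.ultrafilter_le_nhds (U.map v)
      (by
        rw [le_principal_iff]
        exact Filter.mem_map.2 (Filter.univ_mem' hv))
    exact ⟨z, hz, hz'⟩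
  have hphi : ∀ x : ℝ, ∃ z ∈ Icc (0:ℝ) 1, Tendsto (fun l => PH b p n l x) U (𝓝 z) :=
    fun x => hlim _ (fun l => ⟨(PH_inv G l).nonneg x, (PH_inv G l).le_one x⟩)
  choose φ hφ1 hφ using hphi
  have hhol : ∀ x ∈ Icc (0:ℝ) 1, ∀ y ∈ Icc (0:ℝ) 1,
      |φ x - φ y| ≤ D ^ 2 * K * |x - y| ^ h := by
    intro x hx y hy
    refine le_of_tendsto ((hφ x).sub (hφ y)).abs ?_
    exact Eventually.of_forall fun l => (PH_inv G l).abs hx hy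
  have hJ : limitSet (gAff b) n ⊆ Icc 0 1 := by
    rw [limitSet_eq' G]; exact iInter_subset _ 0
  have hsurj : Icc (0:ℝ) 1 ⊆ φ '' limitSet (gAff b) n := by
    intro y hy
    have := fun l => PH_surj G l y hy
    choose x hx hxy using this
    obtain ⟨z, hz, hz'⟩ := hlim x (fun l => EE_sub_Icc G l (hx l))
    refine ⟨z, ?_, ?_⟩
    · rw [limitSet_eq' G, mem_iInter]
      intro l
      apply (EE_compact b n l).isClosed.mem_of_tendsto hz'
      apply hU
      filter_upwards [eventually_ge_atTop l] with m hm
      exact EE_anti G hm (hx m)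
    · have h1 : Tendsto (fun l => D ^ 2 * K * |x l - z| ^ h) U (𝓝 (D ^ 2 * K * |z - z| ^ h)) := by
        apply Tendsto.const_mul
        apply Tendsto.rpow_const _ (Or.inr G.hpos.le)
        exact (hz'.sub_const z).abs
      rw [sub_self, abs_zero, Real.zero_rpow G.hpos.ne', mul_zero] at h1
      have h2 : Tendsto (fun l => PH b p n l (x l) - PH b p n l z) U (𝓝 0) := by
        apply squeeze_zero_norm _ h1
        intro l
        exact (PH_inv G l).abs (EE_sub_Icc G l (hx l)) hz
      simp only [hxy] at h2
      have h3 := (hφ z).const_sub y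
      have := tendsto_nhds_unique h2 h3
      linarith
  have hH : HolderOnWith (D ^ 2 * K).toNNReal h.toNNReal φ (limitSet (gAff b) n) := by
    intro x hx y hy
    rw [edist_dist, edist_dist, Real.dist_eq, Real.dist_eq, Real.coe_toNNReal h G.hpos.le,
      ENNReal.ofReal_rpow_of_nonneg (abs_nonneg _) G.hpos.le]
    change _ ≤ ENNReal.ofReal _ * _
    rw [← ENNReal.ofReal_mul hC]
    exact ENNReal.ofReal_le_ofReal (hhol x (hJ hx) y (hJ hy))
  have h1 := hH.hausdorffMeasure_image_le (by simpa using G.hpos) (d := 1) zero_le_one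
  rw [hausdorffMeasure_real, mul_one, Real.coe_toNNReal h G.hpos.le, ENNReal.rpow_one] at h1
  refine le_trans ?_ h1
  calc (1 : ENNReal) = volume (Icc (0:ℝ) 1) := by simp
    _ ≤ _ := measure_mono hsurj

lemma cover (G : Good b n p h D θ K) {q : NNReal} (hq : ∀ k, b k - b (k+1) ≤ q) (l : ℕ) :
    ∃ (ι : Type) (_ : Fintype ι) (t : ι → Set ℝ), EE b n l ⊆ ⋃ i, t i ∧
      (∀ i, Metric.ediam (t i) ≤ (q : ENNReal) ^ l) ∧ ∑ i, Metric.ediam (t i) ^ h ≤ 1 := by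
  induction l with
  | zero =>
    refine ⟨Unit, inferInstance, fun _ => Icc 0 1, ?_, ?_, ?_⟩
    · exact fun x hx => mem_iUnion.2 ⟨(), hx⟩
    · simp
    · simp
  | succ l ih =>
    obtain ⟨ι, hι, t, h1, h2, h3⟩ := ih
    have hlip : ∀ k, LipschitzWith (b k - b (k+1)).toNNReal (gAff b (k+1)) := by
      intro k
      apply LipschitzWith.of_dist_le_mul
      intro x y
      rw [Real.coe_toNNReal _ (G.apos k).le, gAff_succ, gAff_succ, Real.dist_eq, Real.dist_eq]
      have : b k - (b k - b (k + 1)) * x - (b k - (b k - b (k + 1)) * y)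
        = (b k - b (k+1)) * (y - x) := by ring
      rw [this, abs_mul, abs_of_pos (G.apos k), abs_sub_comm]
    refine ⟨Fin n × ι, inferInstance, fun i => gAff b (i.1+1) '' t i.2, ?_, ?_, ?_⟩
    · intro x hx
      simp only [EE, mem_iUnion, exists_prop, mem_image] at hx
      obtain ⟨k, hk, y, hy, rfl⟩ := hx
      obtain ⟨i, hi⟩ := mem_iUnion.1 (h1 hy)
      exact mem_iUnion.2 ⟨(⟨k, Finset.mem_range.1 hk⟩, i), y, hi, rfl⟩
    · rintro ⟨k, i⟩
      refine ((hlip k).ediam_image_le _).trans ?_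
      rw [pow_succ']
      gcongr
      · exact Real.toNNReal_le_iff_le_coe.2 (hq k)
      · exact h2 i
    · calc ∑ i : Fin n × ι, Metric.ediam (gAff b (i.1+1) '' t i.2) ^ h
          ≤ ∑ i : Fin n × ι, ENNReal.ofReal (p i.1) * Metric.ediam (t i.2) ^ h := by
            apply Finset.sum_le_sum
            rintro ⟨k, i⟩ -
            rw [G.ph, ← ENNReal.ofReal_rpow_of_nonneg (G.apos k).le G.hpos.le,
              ← ENNReal.mul_rpow_of_nonneg _ _ G.hpos.le]
            exact ENNReal.rpow_le_rpow ((hlip k).ediam_image_le _) G.hpos.le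
        _ = (∑ k : Fin n, ENNReal.ofReal (p k)) * ∑ i, Metric.ediam (t i) ^ h := by
            rw [Fintype.sum_prod_type, Finset.sum_mul_sum]
        _ = ∑ i, Metric.ediam (t i) ^ h := by
            rw [Fin.sum_univ_eq_sum_range (fun k => ENNReal.ofReal (p k)),
              ← ENNReal.ofReal_sum_of_nonneg (fun k _ => (G.ppos k).le), G.psum]
            simp
        _ ≤ 1 := h3

lemma upper (G : Good b n p h D θ K) {q : NNReal} (hq1 : q < 1)
    (hq : ∀ k, b k - b (k+1) ≤ q) : μH[h] (limitSet (gAff b) n) ≤ 1 := by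
  have := fun l => cover G hq l
  choose ι hι t h1 h2 h3 using this
  have hr : Tendsto (fun l : ℕ => (q : ENNReal) ^ l) atTop (𝓝 0) :=
    ENNReal.tendsto_pow_atTop_nhds_zero_of_lt_one (by exact_mod_cast hq1)
  have := Measure.hausdorffMeasure_le_liminf_sum h (limitSet (gAff b) n) _ hr t
    (Eventually.of_forall h2) (Eventually.of_forall fun l => by
      rw [limitSet_eq' G]; exact (iInter_subset _ l).trans (h1 l))
  refine this.trans ?_
  refine (liminf_le_liminf (Eventually.of_forall h3)).trans ?_
  simp

end

lemma rpow_eq_mul_exp {a h : ℝ} (ha : 0 < a) : a ^ h = a * Real.exp ((1 - h) * (- Real.log a)) := by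
  rw [Real.rpow_def_of_pos ha]
  nth_rewrite 2 [← Real.exp_log ha]
  rw [← Real.exp_add]
  congr 1; ring

lemma b_ratio {α : ℝ} {b : ℕ → ℝ} (hb : ∀ k : ℕ, b k = 1 / ((k : ℝ) + 1) ^ α) (k : ℕ) :
    b k = b (k+1) * (((k:ℝ) + 2) / (k + 1)) ^ α := by
  have h1 : (0:ℝ) < k + 1 := by positivity
  have h2 : (0:ℝ) < k + 2 := by positivity
  rw [hb, hb, Real.div_rpow h2.le h1.le]
  push_cast
  rw [show (k:ℝ) + 1 + 1 = k + 2 by ring]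
  have := (Real.rpow_pos_of_pos h1 α).ne'
  have := (Real.rpow_pos_of_pos h2 α).ne'
  field_simp

/-- For `b_k = 1/(k+1)^α` with `α > 0`, conditions (C1) and (C2) hold, and consequently
    `lim_{n→∞} H_{h_n}(J_n) = 1`. -/
theorem polynomial_example
    (α : ℝ) (hα : 0 < α)
    (b : ℕ → ℝ) (h : ℕ → ℝ)
    (hb : ∀ k : ℕ, b k = 1 / ((k : ℝ) + 1) ^ α)
    (hmoran : ∀ n, 1 ≤ n → ∑ k ∈ Finset.Icc 1 n, (b (k - 1) - b k) ^ h n = 1)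
    (hdimH : ∀ n, 1 ≤ n → dimH (limitSet (gAff b) n) = ENNReal.ofReal (h n)) :
    Filter.Tendsto (fun n : ℕ => (1 - h n) * Real.log n) Filter.atTop (nhds 0) ∧
    (∃ M : ℝ, ∀ k : ℕ, (b k - b (k + 1)) / b (k + 1) ≤ M) ∧
    Filter.Tendsto (fun n : ℕ => μH[h n] (limitSet (gAff b) n)) Filter.atTop (nhds 1) := by
  have hbpos : ∀ k, 0 < b k := fun k => by rw [hb]; positivity
  have hb0 : b 0 = 1 := by rw [hb]; simp
  have h2α : 1 < (2:ℝ) ^ α := Real.one_lt_rpow (by norm_num) hα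
  have hrat : ∀ k : ℕ, ((k:ℝ) + 2) / (k + 1) = 1 + 1 / (k + 1) := fun k => by
    have : (0:ℝ) < k + 1 := by positivity
    field_simp; ring
  have hr1 : ∀ k : ℕ, 1 < ((k:ℝ) + 2) / (k + 1) := fun k => by
    rw [hrat]
    have : (0:ℝ) < 1 / (k + 1) := by positivity
    linarith
  have hr2 : ∀ k : ℕ, ((k:ℝ) + 2) / (k + 1) ≤ 2 := fun k => by
    have : (0:ℝ) < k + 1 := by positivity
    rw [div_le_iff₀ this]; linarith [(Nat.cast_nonneg k : (0:ℝ) ≤ k)]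
  have hra : ∀ k : ℕ, b k ≤ b (k+1) * 2 ^ α := fun k => by
    rw [b_ratio hb k]
    have : (((k:ℝ) + 2) / (k + 1)) ^ α ≤ 2 ^ α :=
      Real.rpow_le_rpow (by linarith [hr1 k]) (hr2 k) hα.le
    exact mul_le_mul_of_nonneg_left this (hbpos _).le
  have hlow : ∀ k : ℕ, b (k+1) * (α / (k + 2)) ≤ b k - b (k+1) := fun k => by
    rw [b_ratio hb k]
    have h0 : (0:ℝ) < ((k:ℝ) + 2) / (k + 1) := by linarith [hr1 k]
    have h1 := Real.add_one_le_exp (Real.log (((k:ℝ) + 2) / (k + 1)) * α)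
    rw [← Real.rpow_def_of_pos h0] at h1
    have h2 := Real.one_sub_inv_le_log_of_pos h0
    have h3 : 1 - (((k:ℝ) + 2) / (k + 1))⁻¹ = 1 / (k + 2) := by
      have : (0:ℝ) < k + 1 := by positivity
      have : (0:ℝ) < k + 2 := by positivity
      field_simp; ring
    rw [h3] at h2
    have h4 : α / (k + 2) ≤ (((k:ℝ) + 2) / (k + 1)) ^ α - 1 := by
      have := mul_le_mul_of_nonneg_right h2 hα.le
      have h5 : α / ((k:ℝ) + 2) = 1 / (k + 2) * α := by ring
      linarith
    have := mul_le_mul_of_nonneg_left h4 (hbpos (k+1)).le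
    linarith
  have hapos : ∀ k : ℕ, 0 < b k - b (k+1) := fun k =>
    lt_of_lt_of_le (mul_pos (hbpos _) (by positivity)) (hlow k)
  have hanti : StrictAnti b := strictAnti_nat_of_succ_lt fun k => sub_pos.1 (hapos k)
  have hble : ∀ k, b k ≤ 1 := fun k => hb0 ▸ hanti.antitone (Nat.zero_le k)
  set θ : ℝ := 1 - ((2:ℝ) ^ α)⁻¹ with hθ
  have hi0 : 0 < ((2:ℝ) ^ α)⁻¹ := by positivity
  have hi1 : ((2:ℝ) ^ α)⁻¹ < 1 := inv_lt_one_of_one_lt₀ h2α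
  have hth : ∀ k, b k - b (k+1) ≤ θ * b k := fun k => by
    have := mul_le_mul_of_nonneg_right (hra k) hi0.le
    rw [mul_assoc, mul_inv_cancel₀ (by positivity), mul_one] at this
    rw [hθ]; linarith
  have hale : ∀ k, b k - b (k+1) < 1 := fun k => by linarith [hble k, hbpos (k+1)]
  have hsum : ∀ n, 1 ≤ n → ∑ k ∈ Finset.range n, (b k - b (k+1)) ^ h n = 1 := by
    intro n hn
    rw [← hmoran n hn, Finset.range_eq_Ico]
    have := Finset.sum_Ico_add' (fun k => (b (k-1) - b k) ^ h n) 0 n 1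
    simp only [Nat.add_sub_cancel] at this
    exact this
  have htel : ∀ n, ∑ k ∈ Finset.range n, (b k - b (k+1)) = 1 - b n := by
    intro n
    rw [Finset.sum_range_sub', hb0]
  have hh1 : ∀ n, 1 ≤ n → h n < 1 := by
    intro n hn
    by_contra hc
    rw [not_lt] at hc
    have h1 : ∑ k ∈ Finset.range n, (b k - b (k+1)) ^ h n
        ≤ ∑ k ∈ Finset.range n, (b k - b (k+1)) := by
      apply Finset.sum_le_sum
      intro k _
      conv_rhs => rw [← Real.rpow_one (b k - b (k+1))]
      exact Real.rpow_le_rpow_of_exponent_ge (hapos k) (hale k).le hc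
    rw [hsum n hn, htel] at h1
    linarith [hbpos n]
  set c : ℝ := (b 0 - b 1) * (- Real.log (b 0 - b 1)) with hc
  have hcpos : 0 < c := mul_pos (hapos 0) (by
    have := Real.log_neg (hapos 0) (hale 0)
    simpa using this)
  have heps : ∀ n, 1 ≤ n → 1 - h n ≤ c⁻¹ * b n := by
    intro n hn
    have h1 : ∀ k, (b k - b (k+1)) + (1 - h n) * ((b k - b (k+1)) * - Real.log (b k - b (k+1)))
        ≤ (b k - b (k+1)) ^ h n := by
      intro k
      rw [rpow_eq_mul_exp (hapos k)]
      have := mul_le_mul_of_nonneg_left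
        (Real.add_one_le_exp ((1 - h n) * (- Real.log (b k - b (k+1))))) (hapos k).le
      linarith
    have h2 := Finset.sum_le_sum (fun k (_ : k ∈ Finset.range n) => h1 k)
    rw [hsum n hn, Finset.sum_add_distrib, htel, ← Finset.mul_sum] at h2
    have h3 : c ≤ ∑ k ∈ Finset.range n, ((b k - b (k+1)) * - Real.log (b k - b (k+1))) := by
      refine Finset.single_le_sum (f := fun k => (b k - b (k+1)) * - Real.log (b k - b (k+1)))
        (fun k _ => ?_) (Finset.mem_range.2 hn)
      have := Real.log_neg (hapos k) (hale k)
      exact mul_nonneg (hapos k).le (by linarith)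
    have h4 := mul_le_mul_of_nonneg_left h3 (by linarith [hh1 n hn] : 0 ≤ 1 - h n)
    rw [← div_eq_inv_mul, le_div_iff₀ hcpos]
    linarith
  have hN : Tendsto (fun n : ℕ => (n:ℝ) + 1) atTop atTop :=
    tendsto_atTop_add_const_right _ _ tendsto_natCast_atTop_atTop
  have hblim : Tendsto b atTop (𝓝 0) := by
    have := (tendsto_rpow_neg_atTop hα).comp hN
    refine this.congr fun n => ?_
    simp only [Function.comp]
    rw [hb, Real.rpow_neg (by positivity), one_div]
  have hFlim : Tendsto (fun n : ℕ => b n * Real.log ((n:ℝ) + 1)) atTop (𝓝 0) := by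
    have := ((isLittleO_log_rpow_atTop hα).tendsto_div_nhds_zero).comp hN
    refine this.congr fun n => ?_
    simp only [Function.comp]
    rw [hb]; ring
  set W : ℕ → ℝ := fun n => (1 - h n) * ((α + 1) * Real.log ((n:ℝ) + 1) + |Real.log α|) with hW
  have hlog0 : ∀ n : ℕ, 0 ≤ Real.log ((n:ℝ) + 1) := fun n =>
    Real.log_nonneg (by linarith [(Nat.cast_nonneg n : (0:ℝ) ≤ n)])
  have hW0 : ∀ n, 1 ≤ n → 0 ≤ W n := fun n hn =>
    mul_nonneg (by linarith [hh1 n hn])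
      (add_nonneg (mul_nonneg (by linarith) (hlog0 n)) (abs_nonneg _))
  have hWlim : Tendsto W atTop (𝓝 0) := by
    have h1 : Tendsto (fun n : ℕ => c⁻¹ * ((α + 1) * (b n * Real.log ((n:ℝ) + 1))
        + b n * |Real.log α|)) atTop (𝓝 (c⁻¹ * ((α + 1) * 0 + 0 * |Real.log α|))) :=
      ((hFlim.const_mul _).add (hblim.mul_const _)).const_mul _
    simp only [mul_zero, zero_mul, add_zero] at h1
    refine tendsto_of_tendsto_of_tendsto_of_le_of_le' tendsto_const_nhds h1 ?_ ?_
    · filter_upwards [eventually_ge_atTop 1] with n hn using hW0 n hn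
    · filter_upwards [eventually_ge_atTop 1] with n hn
      have := mul_le_mul_of_nonneg_right (heps n hn)
        (add_nonneg (mul_nonneg (by linarith : 0 ≤ α + 1) (hlog0 n)) (abs_nonneg (Real.log α)))
      refine this.trans (le_of_eq ?_)
      ring
  refine ⟨?_, ?_, ?_⟩
  · have h1 : Tendsto (fun n : ℕ => c⁻¹ * (b n * Real.log ((n:ℝ) + 1))) atTop (𝓝 (c⁻¹ * 0)) :=
      hFlim.const_mul _
    rw [mul_zero] at h1
    refine tendsto_of_tendsto_of_tendsto_of_le_of_le' tendsto_const_nhds h1 ?_ ?_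
    · filter_upwards [eventually_ge_atTop 1] with n hn
      exact mul_nonneg (by linarith [hh1 n hn]) (Real.log_natCast_nonneg n)
    · filter_upwards [eventually_ge_atTop 1] with n hn
      have hn' : (0:ℝ) < n := by exact_mod_cast hn
      have h2 : Real.log n ≤ Real.log ((n:ℝ) + 1) := Real.log_le_log hn' (by linarith)
      have h3 := mul_le_mul (heps n hn) h2 (Real.log_natCast_nonneg n)
        (mul_nonneg (inv_nonneg.2 hcpos.le) (hbpos n).le)
      linarith
  · refine ⟨2 ^ α, fun k => ?_⟩
    rw [div_le_iff₀ (hbpos _)]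
    linarith [hra k, hbpos (k+1)]
  · set D : ℕ → ℝ := fun n => Real.exp (W n) with hD
    have hDlim : Tendsto D atTop (𝓝 1) := by
      have := (Real.continuous_exp.tendsto 0).comp hWlim
      rwa [Real.exp_zero] at this
    have hden : Tendsto (fun n => 1 - θ * D n ^ 2) atTop (𝓝 (1 - θ)) := by
      have := ((hDlim.pow 2).const_mul θ).const_sub 1
      simpa using this
    have h1θ : 0 < 1 - θ := by rw [hθ]; linarith
    set K : ℕ → ℝ := fun n => D n * (1 - θ) / (1 - θ * D n ^ 2) with hK
    have hKlim : Tendsto K atTop (𝓝 1) := by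
      have := (hDlim.mul_const (1 - θ)).div hden h1θ.ne'
      rwa [one_mul, div_self h1θ.ne'] at this
    have hClim : Tendsto (fun n => (D n ^ 2 * K n)) atTop (𝓝 1) := by
      have := (hDlim.pow 2).mul hKlim
      simpa using this
    have hhpos : ∀ᶠ n in atTop, 0 < h n := by
      have h1 : Tendsto (fun n => c⁻¹ * b n) atTop (𝓝 (c⁻¹ * 0)) := hblim.const_mul _
      rw [mul_zero] at h1
      filter_upwards [h1.eventually_lt_const zero_lt_one, eventually_ge_atTop 1] with n hn hn1
      linarith [heps n hn1]
    have hgood : ∀ᶠ n in atTop,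
        Good b n (fun k => (b k - b (k+1)) ^ h n) (h n) (D n) θ (K n) := by
      filter_upwards [hhpos, eventually_ge_atTop 1, hden.eventually_const_lt h1θ] with n hp hn hd
      have hD1 : 1 ≤ D n := Real.one_le_exp (hW0 n hn)
      have hθ0 : 0 ≤ θ := by rw [hθ]; linarith
      refine ⟨hanti, hb0, hbpos, hp, (hh1 n hn).le, fun k => rfl, hsum n hn, ?_, hD1, hθ0,
        by linarith, hth, ?_, ?_⟩
      · intro k hk
        rw [rpow_eq_mul_exp (hapos k), mul_comm]
        apply mul_le_mul_of_nonneg_right _ (hapos k).le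
        apply Real.exp_le_exp.2
        apply mul_le_mul_of_nonneg_left _ (by linarith [hh1 n hn])
        have hk2 : (0:ℝ) < (k:ℝ) + 2 := by positivity
        have h1 := Real.log_le_log (mul_pos (hbpos (k+1)) (div_pos hα hk2)) (hlow k)
        rw [Real.log_mul (hbpos (k+1)).ne' (div_pos hα hk2).ne', Real.log_div hα.ne' hk2.ne',
          hb (k+1), one_div, Real.log_inv, Real.log_rpow (by positivity)] at h1
        push_cast at h1
        rw [show (k:ℝ) + 1 + 1 = k + 2 by ring] at h1
        have h2 : Real.log ((k:ℝ) + 2) ≤ Real.log ((n:ℝ) + 1) := by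
          apply Real.log_le_log hk2
          have : (k:ℝ) + 1 ≤ n := by exact_mod_cast hk
          linarith
        have h3 := neg_abs_le (Real.log α)
        have h4 := mul_le_mul_of_nonneg_left h2 (by linarith : 0 ≤ α + 1)
        have h5 : b k - b (k+1) = b k - 1 / (((k:ℝ)+2)) ^ α := by
          rw [hb (k+1)]; push_cast; rw [show (k:ℝ) + 1 + 1 = k + 2 by ring]
        rw [h5]
        simp only [one_div] at h1 ⊢
        linarith
      · rw [hK]
        simp only
        rw [le_div_iff₀ hd]
        have e1 : 0 ≤ θ * (D n ^ 2 - 1) := mul_nonneg hθ0 (by nlinarith)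
        have e2 := mul_nonneg (sub_nonneg.2 hD1) h1θ.le
        linarith
      · have : K n * (1 - θ * D n ^ 2) = D n * (1 - θ) := div_mul_cancel₀ _ hd.ne'
        nlinarith
    have hlo : Tendsto (fun n => (ENNReal.ofReal (D n ^ 2 * K n))⁻¹) atTop (𝓝 1) := by
      have := (ENNReal.tendsto_ofReal hClim).inv
      simpa using this
    refine tendsto_of_tendsto_of_tendsto_of_le_of_le' hlo tendsto_const_nhds ?_ ?_
    · filter_upwards [hgood] with n G
      have := lower G
      rw [mul_comm] at this
      rw [← one_div]
      exact ENNReal.div_le_of_le_mul this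
    · filter_upwards [hgood] with n G
      refine upper G (q := θ.toNNReal) ?_ ?_
      · rw [Real.toNNReal_lt_one]; linarith
      · intro k
        refine le_trans ?_ (Real.le_coe_toNNReal θ)
        have := hth k
        nlinarith [hble k, G.th0]
end
end

section
/- Let g_k : [0,1] → [0,1], k ≥ 1, be C² maps with g_k′ nonvanishing, such that there exist α < 1 and c > 0 with |g_k′(x)| < α and |g_k″(x)/g_k′(x)| < c for all k ≥ 1 and all x ∈ [0,1]. Then there is a constant D > 0 such that for every finite word ω = (i_1,…,i_m) ∈ ℕ^* and the composition g_ω = g_{i_1}∘g_{i_2}∘⋯∘g_{i_m}, and for all x, y ∈ [0,1], one has |g_ω′(x)|/|g_ω′(y)| ≤ 1 + (c/(1−α))·|x−y| + D·|x−y|². -/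
open Set Filter MeasureTheory Topology

noncomputable section

/-- The derivative `g_ω′(x)` of the composition along a word, computed by the chain rule. -/
def wordDeriv (g g' : ℕ → ℝ → ℝ) : List ℕ → ℝ → ℝ
  | [], _ => 1
  | k :: w, x => g' k (wordComp g w x) * wordDeriv g g' w x

theorem wd_aux
    (g g' g'' : ℕ → ℝ → ℝ) (α c : ℝ) (hα0 : 0 < α) (hc : 0 < c)
    (hmap : ∀ k, 1 ≤ k → Set.MapsTo (g k) (Set.Icc (0 : ℝ) 1) (Set.Icc (0 : ℝ) 1))
    (hd1 : ∀ k, 1 ≤ k → ∀ x ∈ Set.Icc (0 : ℝ) 1, HasDerivAt (g k) (g' k x) x)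
    (hd2 : ∀ k, 1 ≤ k → ∀ x ∈ Set.Icc (0 : ℝ) 1, HasDerivAt (g' k) (g'' k x) x)
    (hne : ∀ k, 1 ≤ k → ∀ x ∈ Set.Icc (0 : ℝ) 1, g' k x ≠ 0)
    (hb1 : ∀ k, 1 ≤ k → ∀ x ∈ Set.Icc (0 : ℝ) 1, |g' k x| < α)
    (hb2 : ∀ k, 1 ≤ k → ∀ x ∈ Set.Icc (0 : ℝ) 1, |g'' k x / g' k x| < c)
    (hα : α < 1) (x : ℝ) (hx : x ∈ Set.Icc (0 : ℝ) 1) (y : ℝ) (hy : y ∈ Set.Icc (0 : ℝ) 1)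
    (w : List ℕ) (hw : ∀ i ∈ w, 1 ≤ i) :
    wordComp g w x ∈ Set.Icc (0 : ℝ) 1 ∧ wordComp g w y ∈ Set.Icc (0 : ℝ) 1 ∧
    wordDeriv g g' w x ≠ 0 ∧ wordDeriv g g' w y ≠ 0 ∧
    |wordComp g w x - wordComp g w y| ≤ α ^ w.length * |x - y| ∧
    (1 - α) * |Real.log (wordDeriv g g' w x) - Real.log (wordDeriv g g' w y)|
      ≤ c * (1 - α ^ w.length) * |x - y| := by
  induction w with
  | nil => simp only [wordComp, wordDeriv]; simpa using ⟨hx, hy⟩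
  | cons k w ih =>
    obtain ⟨h1, h2, h3, h4, h5, h6⟩ := ih (fun i hi => hw i (by simp [hi]))
    have hk : 1 ≤ k := hw k (by simp)
    have e1 := hne k hk _ h1
    have e2 := hne k hk _ h2
    have m1 : |g k (wordComp g w x) - g k (wordComp g w y)|
        ≤ α * |wordComp g w x - wordComp g w y| := by
      have := Convex.norm_image_sub_le_of_norm_hasDerivWithin_le (f := g k) (f' := g' k)
        (C := α) (s := Set.Icc (0:ℝ) 1) (fun z hz => (hd1 k hk z hz).hasDerivWithinAt)
        (fun z hz => (hb1 k hk z hz).le) (convex_Icc 0 1) h2 h1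
      simpa [Real.norm_eq_abs] using this
    have m2 : |Real.log (g' k (wordComp g w x)) - Real.log (g' k (wordComp g w y))|
        ≤ c * |wordComp g w x - wordComp g w y| := by
      have := Convex.norm_image_sub_le_of_norm_hasDerivWithin_le
        (f := fun z => Real.log (g' k z)) (f' := fun z => g'' k z / g' k z)
        (C := c) (s := Set.Icc (0:ℝ) 1)
        (fun z hz => ((hd2 k hk z hz).log (hne k hk z hz)).hasDerivWithinAt)
        (fun z hz => (hb2 k hk z hz).le) (convex_Icc 0 1) h2 h1
      simpa [Real.norm_eq_abs] using this
    refine ⟨hmap k hk h1, hmap k hk h2, mul_ne_zero e1 h3, mul_ne_zero e2 h4, ?_, ?_⟩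
    · simp only [wordComp, Function.comp, List.length_cons]
      calc _ ≤ _ := m1
        _ ≤ α * (α ^ w.length * |x - y|) := by gcongr
        _ = _ := by ring
    · simp only [wordDeriv, List.length_cons]
      rw [Real.log_mul e1 h3, Real.log_mul e2 h4]
      have t := abs_add_le (Real.log (g' k (wordComp g w x)) - Real.log (g' k (wordComp g w y)))
        (Real.log (wordDeriv g g' w x) - Real.log (wordDeriv g g' w y))
      have m3 := m2.trans (mul_le_mul_of_nonneg_left h5 hc.le)
      have hp : 0 ≤ 1 - α := by linarith
      rw [add_sub_add_comm]
      have q1 := mul_le_mul_of_nonneg_left t hp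
      have q2 := mul_le_mul_of_nonneg_left m3 hp
      rw [pow_succ]
      linarith

/-- Distortion bound for compositions: if `|g_k′| < α < 1` and `|g_k″/g_k′| < c` uniformly,
    then there is `D > 0` with
    `|g_ω′(x)|/|g_ω′(y)| ≤ 1 + (c/(1-α))·|x-y| + D·|x-y|²` for all finite words `ω`. -/
theorem distortion_estimate
    (g g' g'' : ℕ → ℝ → ℝ) (α c : ℝ) (hα : α < 1) (hc : 0 < c)
    (hmap : ∀ k, 1 ≤ k → Set.MapsTo (g k) (Set.Icc (0 : ℝ) 1) (Set.Icc (0 : ℝ) 1))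
    (hd1 : ∀ k, 1 ≤ k → ∀ x ∈ Set.Icc (0 : ℝ) 1, HasDerivAt (g k) (g' k x) x)
    (hd2 : ∀ k, 1 ≤ k → ∀ x ∈ Set.Icc (0 : ℝ) 1, HasDerivAt (g' k) (g'' k x) x)
    (hne : ∀ k, 1 ≤ k → ∀ x ∈ Set.Icc (0 : ℝ) 1, g' k x ≠ 0)
    (hb1 : ∀ k, 1 ≤ k → ∀ x ∈ Set.Icc (0 : ℝ) 1, |g' k x| < α)
    (hb2 : ∀ k, 1 ≤ k → ∀ x ∈ Set.Icc (0 : ℝ) 1, |g'' k x / g' k x| < c) :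
    ∃ D > (0 : ℝ), ∀ w : List ℕ, w ≠ [] → (∀ i ∈ w, 1 ≤ i) →
      ∀ x ∈ Set.Icc (0 : ℝ) 1, ∀ y ∈ Set.Icc (0 : ℝ) 1,
        |wordDeriv g g' w x| / |wordDeriv g g' w y| ≤
          1 + c / (1 - α) * |x - y| + D * |x - y| ^ 2 := by
  have hα0 : 0 < α := (abs_nonneg _).trans_lt (hb1 1 le_rfl 0 (by simp))
  have hp : 0 < 1 - α := by linarith
  have hK : 0 < c / (1 - α) := by positivity
  set K := c / (1 - α) with hKd
  refine ⟨K ^ 2 * Real.exp K, by positivity, ?_⟩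
  intro w _ hw x hx y hy
  obtain ⟨-, -, h3, h4, -, h6⟩ := wd_aux g g' g'' α c hα0 hc hmap hd1 hd2 hne hb1 hb2 hα
    x hx y hy w hw
  have hL : Real.log (wordDeriv g g' w x) - Real.log (wordDeriv g g' w y) ≤ K * |x - y| := by
    refine (le_abs_self _).trans ?_
    rw [hKd, div_mul_eq_mul_div, le_div_iff₀ hp, mul_comm]
    refine h6.trans ?_
    have : 0 ≤ α ^ w.length := by positivity
    have h : c * (1 - α ^ w.length) ≤ c := by nlinarith
    gcongr
  have hr : |wordDeriv g g' w x| / |wordDeriv g g' w y| =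
      Real.exp (Real.log (wordDeriv g g' w x) - Real.log (wordDeriv g g' w y)) := by
    rw [Real.exp_sub, Real.exp_log_eq_abs h3, Real.exp_log_eq_abs h4]
  rw [hr]
  refine (Real.exp_le_exp.2 hL).trans ?_
  have hd : |x - y| ≤ 1 := by
    rw [abs_le]; constructor <;> linarith [hx.1, hx.2, hy.1, hy.2]
  set t := K * |x - y| with ht
  have ht0 : 0 ≤ t := by positivity
  have htK : t ≤ K := by nlinarith
  have a1 : Real.exp t ≤ 1 + t * Real.exp t := by
    have b := Real.add_one_le_exp (-t)
    have b2 : Real.exp (-t) * Real.exp t = 1 := by rw [← Real.exp_add]; simp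
    nlinarith [Real.exp_pos t]
  have a2 : Real.exp t ≤ 1 + t + t ^ 2 * Real.exp t := by nlinarith
  have a3 : t ^ 2 * Real.exp t ≤ t ^ 2 * Real.exp K := by gcongr
  have a4 : K ^ 2 * Real.exp K * |x - y| ^ 2 = t ^ 2 * Real.exp K := by rw [ht]; ring
  linarith
end
end
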